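/- Let f : 𝔹 → ℂ be holomorphic with f(0) = 1, F(x) = f(x)·x for x ∈ 𝔹, and assume F is biholomorphic on 𝔹. Then for every u ∈ X with ‖u‖ = 1 and every λ ∈ [0,1), ‖(1/3!)·D³F(0)(u,u,u) − λ·(1/2!)·D²F(0)(u, (1/2!)·D²F(0)(u,u))‖ ≤ 1 + 2·exp(−2λ/(1−λ)). -/

import Mathlib

open Metric Set

noncomputable section

/-- A holomorphic map is biholomorphic on an open set `s` if it is holomorphic and injective
on `s` and admits a holomorphic inverse on the image `f '' s`. -/
def IsBiholoOn {E₁ E₂ : Type*} [NormedAddCommGroup E₁] [NormedSpace ℂ E₁]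
    [NormedAddCommGroup E₂] [NormedSpace ℂ E₂] (f : E₁ → E₂) (s : Set E₁) : Prop :=
  DifferentiableOn ℂ f s ∧ Set.InjOn f s ∧
    ∃ g : E₂ → E₁, DifferentiableOn ℂ g (f '' s) ∧ ∀ x ∈ s, g (f x) = x

/-
On the complex line spanned by a unit vector `u`, the map `F` restricts to `ζ • u ↦ g ζ • u` with
`g ζ = ζ * f (ζ • u)` univalent on the unit disc, and `DⁿF(0)(u, …, u) = g⁽ⁿ⁾(0) • u` because `f`
is smooth by Cauchy estimates. This reduces the claim to the Fekete–Szegő inequality for `g`.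

For a univalent `f` on the disc let `S` and `P` be the Schwarzian `f''' / f' - (3/2) (f'' / f')²`
and the pre-Schwarzian `f'' / f'` at `0`, and put `μ = 1 - λ`. Then
`a₃ - λ a₂² = S / 6 + μ P² / 4`, and after a rotation it is enough to bound
`Re S / 6 + μ (Re P)² / 4`. This follows by optimizing over `m` in the bounds
`Re S / 6 + 2 m |Re P| ≤ 1 + 4 U(m, 1)`, where `U` is an explicit potential. They are proved by a
discrete form of Loewner's method. If `f` maps the disc into itself and `|f' 0| < s²`, then `f`
omits a value of modulus `s²`, and the Koebe transform writes `f = B ∘ g` with `g` univalent and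
`B` a Blaschke product of degree two, for which `|B' 0| = 2 s / (1 + s²)`. A Lyapunov function
built from `S`, `P` and `U` does not decrease from `f` to `g`. Finitely many steps lead to
`|g' 0| ≥ s²`, and as `s → 1` this forces the `S` and `P` of `g` to `0`.
-/

section ScalarInequalities

lemma one_sub_div_one_add_le_exp {e : ℝ} (he : 0 ≤ e) :
    (1 - e) / (1 + e) ≤ Real.exp (-2 * e) := by
  rcases le_or_gt 1 e with he1 | he1
  · exact (div_nonpos_of_nonpos_of_nonneg (by linarith) (by linarith)).trans (Real.exp_pos _).le
  have hpos : 0 < 1 - e := by linarith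
  have hlog : 2 * e ≤ Real.log ((1 + e) / (1 - e)) := by
    have h := Real.le_log_one_add_of_nonneg (x := 2 * e / (1 - e)) (by positivity)
    have h₁ : 2 * (2 * e / (1 - e)) / (2 * e / (1 - e) + 2) = 2 * e := by
      rw [div_add' _ _ _ hpos.ne']
      field_simp
      ring
    have h₂ : 1 + 2 * e / (1 - e) = (1 + e) / (1 - e) := by
      field_simp
      ring
    rwa [h₁, h₂] at h
  rw [← inv_div, neg_mul, Real.exp_neg]
  gcongr
  exact (Real.le_log_iff_exp_le (by positivity)).1 hlog

lemma two_mul_sq_div_sub_two_mul_add_one_le_exp {q u : ℝ} (hq : 1 ≤ q) (hu : 1 ≤ u) :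
    2 * u ^ 2 / q - 2 * u + 1 ≤ Real.exp (2 * (u - q)) := by
  have : 0 < q := by linarith
  rcases le_total q u with hqu | huq
  · calc 2 * u ^ 2 / q - 2 * u + 1 = 1 + 2 * (u - q) + 2 * (u - q) ^ 2 / q := by field_simp; ring
      _ ≤ 1 + 2 * (u - q) + (2 * (u - q)) ^ 2 / 2 := by
        linarith [div_le_self (by positivity : 0 ≤ 2 * (u - q) ^ 2) hq]
      _ ≤ Real.exp (2 * (u - q)) := Real.quadratic_le_exp_of_nonneg (by linarith)
  · have he : 0 ≤ q - u := by linarith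
    calc 2 * u ^ 2 / q - 2 * u + 1 = 1 - 2 * (q - u) + 2 * (q - u) ^ 2 / q := by field_simp; ring
      _ ≤ 1 - 2 * (q - u) + 2 * (q - u) ^ 2 / (1 + (q - u)) := by
        gcongr
        linarith
      _ = (1 - (q - u)) / (1 + (q - u)) := by field_simp; ring
      _ ≤ Real.exp (-2 * (q - u)) := one_sub_div_one_add_le_exp he
      _ = Real.exp (2 * (u - q)) := by ring_nf

lemma exists_sub_mul_log_eq {y : ℝ} (hy : y ∈ Icc (0 : ℝ) 1) :
    ∃ m ∈ Icc (0 : ℝ) 1, m - m * Real.log m = y := by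
  have hcont : ContinuousOn (fun m : ℝ => m - m * Real.log m) (Icc 0 1) :=
    (continuous_id.sub Real.continuous_mul_log).continuousOn
  simpa using intermediate_value_Icc zero_le_one hcont (by simpa using hy)

lemma sq_mul_one_sub_log_quadratic_le_exp {m μ : ℝ} (hm : m ∈ Icc (0 : ℝ) 1) (hμ : 0 < μ)
    (hμ1 : μ ≤ 1) :
    m ^ 2 * (2 * μ * (1 - Real.log m) ^ 2 - 2 * (1 - Real.log m) + 1) ≤
      Real.exp (-2 * (1 / μ - 1)) := by
  rcases hm.1.eq_or_lt with rfl | hm₀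
  · simp only [ne_eq, OfNat.ofNat_ne_zero, not_false_eq_true, zero_pow, zero_mul]
    positivity
  have hu : 1 ≤ 1 - Real.log m := by linarith [Real.log_nonpos hm.1 hm.2]
  have h := two_mul_sq_div_sub_two_mul_add_one_le_exp ((one_le_div hμ).2 hμ1) hu
  calc m ^ 2 * (2 * μ * (1 - Real.log m) ^ 2 - 2 * (1 - Real.log m) + 1)
      = m ^ 2 * (2 * (1 - Real.log m) ^ 2 / (1 / μ) - 2 * (1 - Real.log m) + 1) := by
        field_simp
    _ ≤ m ^ 2 * Real.exp (2 * (1 - Real.log m - 1 / μ)) := by gcongr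
    _ = Real.exp (2 * Real.log m) * Real.exp (2 * (1 - Real.log m - 1 / μ)) := by
        rw [two_mul (Real.log m), Real.exp_add, Real.exp_log hm₀, sq]
    _ = Real.exp (-2 * (1 / μ - 1)) := by
        rw [← Real.exp_add]
        ring_nf

end ScalarInequalities

/-- The rate `c · dU/dc` at which `logPotential m` grows with respect to `log c`. It is the maximum
of `2 * m * v - v ^ 2` over `v ≤ c`. -/
def logPotentialRate (m c : ℝ) : ℝ := min m c * (2 * m - min m c)

/-- The potential `U` with `U 0 = 0` and `c · dU/dc = logPotentialRate m c`, i.e. `2 m c - c² / 2`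
for `c ≤ m`, continued by `m² log c + const` for `c ≥ m`. For `m = 0` it vanishes. -/
def logPotential (m c : ℝ) : ℝ :=
  2 * m * min m c - min m c ^ 2 / 2 + m ^ 2 * Real.log (c / min m c)

section LogPotential

variable {m c x y : ℝ}

lemma two_mul_sub_sq_le_logPotentialRate {v : ℝ} (hv : v ≤ c) :
    2 * m * v - v ^ 2 ≤ logPotentialRate m c := by
  rcases le_total m c with h | h
  · rw [logPotentialRate, min_eq_left h]
    linarith [sq_nonneg (m - v)]
  · rw [logPotentialRate, min_eq_right h]
    nlinarith

lemma logPotentialRate_nonneg (hm : 0 ≤ m) (hc : 0 ≤ c) : 0 ≤ logPotentialRate m c :=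
  mul_nonneg (le_min hm hc) (by linarith [min_le_left m c])

lemma logPotentialRate_le_sq : logPotentialRate m c ≤ m ^ 2 := by
  rw [logPotentialRate]
  linarith [sq_nonneg (m - min m c)]

lemma logPotential_of_le (hcm : c ≤ m) : logPotential m c = 2 * m * c - c ^ 2 / 2 := by
  rcases eq_or_ne c 0 with rfl | hc
  · simp [logPotential, min_eq_right hcm]
  · simp [logPotential, min_eq_right hcm, div_self hc]

lemma logPotential_of_ge (hmc : m ≤ c) :
    logPotential m c = 3 / 2 * m ^ 2 + m ^ 2 * Real.log (c / m) := by
  rw [logPotential, min_eq_left hmc]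
  ring

lemma logPotential_nonneg (hm : 0 ≤ m) (hc : 0 ≤ c) : 0 ≤ logPotential m c := by
  rcases le_total c m with h | h
  · rw [logPotential_of_le h]
    nlinarith
  · rw [logPotential_of_ge h]
    rcases hm.eq_or_lt with rfl | hm
    · simp
    · have := Real.log_nonneg ((one_le_div hm).2 h)
      positivity

private lemma logPotential_sub_of_le (hx : 0 < x) (hxy : x ≤ y) (hym : y ≤ m) :
    (1 - x / y) * logPotentialRate m x ≤ logPotential m y - logPotential m x := by
  have hy : 0 < y := hx.trans_le hxy
  have h : logPotential m y - logPotential m x - (1 - x / y) * logPotentialRate m x =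
      (y - x) ^ 2 * (4 * m - y - 2 * x) / (2 * y) := by
    rw [logPotential_of_le hym, logPotential_of_le (hxy.trans hym), logPotentialRate,
      min_eq_right (hxy.trans hym)]
    field_simp
    ring
  rw [← sub_nonneg, h]
  have : 0 ≤ 4 * m - y - 2 * x := by linarith
  positivity

private lemma logPotential_sub_of_ge (hm : 0 ≤ m) (hx : 0 < x) (hmx : m ≤ x) (hxy : x ≤ y) :
    (1 - x / y) * m ^ 2 ≤ logPotential m y - logPotential m x := by
  rcases hm.eq_or_lt with rfl | hm
  · simp [logPotential_of_ge hmx, logPotential_of_ge (hmx.trans hxy)]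
  have hy : 0 < y := hx.trans_le hxy
  have hlog : 1 - x / y ≤ Real.log (y / x) := by
    simpa using Real.one_sub_inv_le_log_of_pos (div_pos hy hx)
  rw [logPotential_of_ge hmx, logPotential_of_ge (hmx.trans hxy), add_sub_add_left_eq_sub,
    ← mul_sub, ← Real.log_div (div_pos hy hm).ne' (div_pos hx hm).ne',
    div_div_div_cancel_right₀ hm.ne', mul_comm]
  gcongr

lemma mul_logPotentialRate_le_sub (hm : 0 ≤ m) (hx : 0 < x) (hxy : x ≤ y) :
    (1 - x / y) * logPotentialRate m x ≤ logPotential m y - logPotential m x := by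
  have hy : 0 < y := hx.trans_le hxy
  rcases le_total y m with hym | hmy
  · exact logPotential_sub_of_le hx hxy hym
  rcases le_total m x with hmx | hxm
  · refine le_trans ?_ (logPotential_sub_of_ge hm hx hmx hxy)
    have : 0 ≤ 1 - x / y := sub_nonneg.2 ((div_le_one hy).2 hxy)
    gcongr
    exact logPotentialRate_le_sq
  have hm : 0 < m := hx.trans_le hxm
  have hxm' : 0 ≤ 1 - x / m := sub_nonneg.2 ((div_le_one hm).2 hxm)
  have hmy' : 0 ≤ 1 - m / y := sub_nonneg.2 ((div_le_one hy).2 hmy)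
  have hsplit : 1 - x / y ≤ (1 - x / m) + (1 - m / y) := by
    have : (1 - x / m) * (1 - m / y) = (1 - x / m) + (1 - m / y) - (1 - x / y) := by
      field_simp
      ring
    nlinarith
  calc (1 - x / y) * logPotentialRate m x
      ≤ ((1 - x / m) + (1 - m / y)) * logPotentialRate m x :=
        mul_le_mul_of_nonneg_right hsplit (logPotentialRate_nonneg hm.le hx.le)
    _ ≤ (1 - x / m) * logPotentialRate m x + (1 - m / y) * m ^ 2 := by
        rw [add_mul]
        gcongr
        exact logPotentialRate_le_sq
    _ ≤ logPotential m y - logPotential m x := by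
        linarith [logPotential_sub_of_le hx hxm le_rfl,
          logPotential_sub_of_ge hm.le hm le_rfl hmy]

lemma logPotential_le_logPotential (hm : 0 ≤ m) (hx : 0 < x) (hxy : x ≤ y) :
    logPotential m x ≤ logPotential m y := by
  have h : 0 ≤ (1 - x / y) * logPotentialRate m x :=
    mul_nonneg (sub_nonneg.2 ((div_le_one (hx.trans_le hxy)).2 hxy))
      (logPotentialRate_nonneg hm hx.le)
  linarith [mul_logPotentialRate_le_sub hm hx hxy]

end LogPotential

section Schwarzian

variable {𝕜 : Type*} [NontriviallyNormedField 𝕜]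

/-- The pre-Schwarzian derivative `f'' / f'`. -/
def preSchwarzian (f : 𝕜 → 𝕜) (z : 𝕜) : 𝕜 := iteratedDeriv 2 f z / deriv f z

/-- The Schwarzian derivative `f''' / f' - (3/2) (f'' / f')²`. -/
def schwarzian (f : 𝕜 → 𝕜) (z : 𝕜) : 𝕜 :=
  iteratedDeriv 3 f z / deriv f z - 3 / 2 * preSchwarzian f z ^ 2

variable {f g : 𝕜 → 𝕜} {z : 𝕜}

lemma preSchwarzian_comp (hf : ContDiffAt 𝕜 2 f (g z)) (hg : ContDiffAt 𝕜 2 g z)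
    (hf' : deriv f (g z) ≠ 0) (hg' : deriv g z ≠ 0) :
    preSchwarzian (f ∘ g) z = preSchwarzian f (g z) * deriv g z + preSchwarzian g z := by
  rw [preSchwarzian, iteratedDeriv_comp_two hf hg,
    deriv_comp z (differentiableAt_of_deriv_ne_zero hf') (differentiableAt_of_deriv_ne_zero hg'),
    preSchwarzian, preSchwarzian]
  field_simp

lemma schwarzian_comp [CharZero 𝕜] (hf : ContDiffAt 𝕜 3 f (g z)) (hg : ContDiffAt 𝕜 3 g z)
    (hf' : deriv f (g z) ≠ 0) (hg' : deriv g z ≠ 0) :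
    schwarzian (f ∘ g) z = schwarzian f (g z) * deriv g z ^ 2 + schwarzian g z := by
  rw [schwarzian, iteratedDeriv_comp_three hf hg,
    preSchwarzian_comp (hf.of_le (by norm_num)) (hg.of_le (by norm_num)) hf' hg',
    deriv_comp z (differentiableAt_of_deriv_ne_zero hf') (differentiableAt_of_deriv_ne_zero hg'),
    schwarzian, schwarzian, preSchwarzian, preSchwarzian]
  field_simp
  ring

lemma iteratedDeriv_comp_mul_left (n : ℕ) (f : 𝕜 → 𝕜) (c : 𝕜) :
    iteratedDeriv n (fun z => f (c * z)) = fun z => c ^ n * iteratedDeriv n f (c * z) := by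
  induction n with
  | zero => simp
  | succ n ih =>
    funext z
    rw [iteratedDeriv_succ, ih, deriv_const_mul_field, deriv_comp_mul_left, smul_eq_mul,
      ← iteratedDeriv_succ, pow_succ, mul_assoc]

lemma iteratedDeriv_const_mul_comp_const_mul (n : ℕ) (f : 𝕜 → 𝕜) (a c z : 𝕜) :
    iteratedDeriv n (fun z => a * f (c * z)) z = a * (c ^ n * iteratedDeriv n f (c * z)) := by
  rw [iteratedDeriv_const_mul_field, iteratedDeriv_comp_mul_left]

lemma deriv_const_mul_comp_const_mul (f : 𝕜 → 𝕜) (a c z : 𝕜) :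
    deriv (fun z => a * f (c * z)) z = a * (c * deriv f (c * z)) := by
  rw [deriv_const_mul_field, deriv_comp_mul_left, smul_eq_mul]

lemma preSchwarzian_const_mul_comp_const_mul {a : 𝕜} (ha : a ≠ 0) (f : 𝕜 → 𝕜) (c z : 𝕜) :
    preSchwarzian (fun z => a * f (c * z)) z = c * preSchwarzian f (c * z) := by
  rw [preSchwarzian, deriv_const_mul_comp_const_mul, iteratedDeriv_const_mul_comp_const_mul,
    mul_div_mul_left _ _ ha, preSchwarzian]
  rcases eq_or_ne c 0 with rfl | hc
  · simp
  · field_simp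

lemma schwarzian_const_mul_comp_const_mul {a : 𝕜} (ha : a ≠ 0) (f : 𝕜 → 𝕜) (c z : 𝕜) :
    schwarzian (fun z => a * f (c * z)) z = c ^ 2 * schwarzian f (c * z) := by
  rw [schwarzian, preSchwarzian_const_mul_comp_const_mul ha, deriv_const_mul_comp_const_mul,
    iteratedDeriv_const_mul_comp_const_mul, mul_div_mul_left _ _ ha, schwarzian]
  rcases eq_or_ne c 0 with rfl | hc
  · simp
  · field_simp

lemma iteratedDeriv_succ_id_mul_zero (n : ℕ) {h : 𝕜 → 𝕜} (hh : ContDiffAt 𝕜 (n + 1 : ℕ) h 0) :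
    iteratedDeriv (n + 1) (fun z => z * h z) 0 = (n + 1) * iteratedDeriv n h 0 := by
  rw [iteratedDeriv_fun_mul contDiffAt_fun_id hh, Finset.sum_eq_single 1]
  · simp [iteratedDeriv_one]
  · intro i _ hi
    rw [iteratedDeriv_fun_id_zero, if_neg hi]
    simp
  · simp

lemma iteratedDeriv_succ_zero_eq_iteratedDeriv_dslope (n : ℕ)
    (hf : ContDiffAt 𝕜 (n + 1 : ℕ) (dslope f 0) 0) :
    iteratedDeriv (n + 1) f 0 = (n + 1) * iteratedDeriv n (dslope f 0) 0 := by
  have hf_eq : f = fun z => f 0 + z * dslope f 0 z := by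
    funext z
    rw [← sub_eq_iff_eq_add']
    simpa using (sub_smul_dslope f 0 z).symm
  conv_lhs => rw [hf_eq]
  rw [iteratedDeriv_const_add n.succ_pos, iteratedDeriv_succ_id_mul_zero n hf]

end Schwarzian

section DiscMobius

open scoped ComplexConjugate Nat Topology

/-- The involutive automorphism `z ↦ (a - z) / (1 - ā z)` of the unit disc, which exchanges `0`
and `a`. -/
def discMobius (a z : ℂ) : ℂ := (a - z) / (1 - conj a * z)

/-- The Blaschke product of degree two with zeros `0` and `β`. -/
def blaschkeTwo (β z : ℂ) : ℂ := z * discMobius β z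

variable {a z β σ t : ℂ}

lemma discMobius_zero_right (a : ℂ) : discMobius a 0 = a := by simp [discMobius]

lemma discMobius_self (a : ℂ) : discMobius a a = 0 := by simp [discMobius]

lemma one_sub_conj_mul_ne_zero (ha : ‖a‖ < 1) (hz : ‖z‖ < 1) : 1 - conj a * z ≠ 0 := by
  refine sub_ne_zero.2 fun h => ?_
  have : ‖a‖ * ‖z‖ = 1 := by rw [← RCLike.norm_conj a, ← norm_mul, ← h, norm_one]
  nlinarith [norm_nonneg a, norm_nonneg z]

lemma norm_one_sub_conj_mul_sq_sub (a z : ℂ) :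
    ‖1 - conj a * z‖ ^ 2 - ‖a - z‖ ^ 2 = (1 - ‖a‖ ^ 2) * (1 - ‖z‖ ^ 2) := by
  simp only [Complex.sq_norm, Complex.normSq_apply, Complex.sub_re, Complex.sub_im, Complex.mul_re,
    Complex.mul_im, Complex.one_re, Complex.one_im, Complex.conj_re, Complex.conj_im]
  ring

lemma norm_discMobius_lt_one (ha : ‖a‖ < 1) (hz : ‖z‖ < 1) : ‖discMobius a z‖ < 1 := by
  rw [discMobius, norm_div, div_lt_one (norm_pos_iff.2 (one_sub_conj_mul_ne_zero ha hz)),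
    ← sq_lt_sq₀ (norm_nonneg _) (norm_nonneg _), ← sub_pos, norm_one_sub_conj_mul_sq_sub]
  exact mul_pos (by nlinarith [norm_nonneg a]) (by nlinarith [norm_nonneg z])

lemma discMobius_discMobius (ha : ‖a‖ < 1) (hz : ‖z‖ < 1) :
    discMobius a (discMobius a z) = z := by
  have h : discMobius a z * (1 - conj a * z) = a - z :=
    div_mul_cancel₀ _ (one_sub_conj_mul_ne_zero ha hz)
  rw [discMobius, div_eq_iff (one_sub_conj_mul_ne_zero ha (norm_discMobius_lt_one ha hz))]
  linear_combination -h

lemma injOn_discMobius (ha : ‖a‖ < 1) : InjOn (discMobius a) (ball 0 1) := fun z hz z' hz' h => by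
  rw [mem_ball_zero_iff] at hz hz'
  rw [← discMobius_discMobius ha hz, h, discMobius_discMobius ha hz']

lemma differentiableOn_discMobius (ha : ‖a‖ < 1) :
    DifferentiableOn ℂ (discMobius a) (ball 0 1) := by
  refine DifferentiableOn.div (by fun_prop) (by fun_prop) fun z hz => ?_
  exact one_sub_conj_mul_ne_zero ha (mem_ball_zero_iff.1 hz)

lemma discMobius_eq_zero_iff (ha : ‖a‖ < 1) (hz : ‖z‖ < 1) : discMobius a z = 0 ↔ z = a := by
  rw [discMobius, div_eq_zero_iff, or_iff_left (one_sub_conj_mul_ne_zero ha hz), sub_eq_zero,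
    eq_comm]

lemma norm_two_mul_div_one_add_norm_sq (σ : ℂ) :
    ‖2 * σ / (1 + ‖σ‖ ^ 2)‖ = 2 * ‖σ‖ / (1 + ‖σ‖ ^ 2) := by
  have h : (1 + ‖σ‖ ^ 2 : ℂ) = ((1 + ‖σ‖ ^ 2 : ℝ) : ℂ) := by push_cast; rfl
  rw [h, norm_div, norm_mul, Complex.norm_ofNat, Complex.norm_of_nonneg (by positivity)]

lemma two_mul_div_one_add_sq_lt_one {s : ℝ} (hs : s < 1) : 2 * s / (1 + s ^ 2) < 1 := by
  rw [div_lt_one (by positivity)]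
  nlinarith [mul_pos (sub_pos.2 hs) (sub_pos.2 hs)]

/-- The Koebe transform `t ↦ φ_w(φ_σ(t)²)`, `w = σ²`, is a Blaschke product of degree two. -/
lemma discMobius_sq_discMobius_sq (hσ : ‖σ‖ < 1) (ht : ‖t‖ < 1) :
    discMobius (σ ^ 2) (discMobius σ t ^ 2) = blaschkeTwo (2 * σ / (1 + ‖σ‖ ^ 2)) t := by
  have hB := one_sub_conj_mul_ne_zero hσ ht
  have hσ2 : ‖σ ^ 2‖ < 1 := by
    rw [norm_pow]
    exact pow_lt_one₀ (norm_nonneg _) hσ two_ne_zero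
  have hA2 : ‖discMobius σ t ^ 2‖ < 1 := by
    rw [norm_pow]
    exact pow_lt_one₀ (norm_nonneg _) (norm_discMobius_lt_one hσ ht) two_ne_zero
  have hL := one_sub_conj_mul_ne_zero hσ2 hA2
  have hβ : ‖2 * σ / (1 + ‖σ‖ ^ 2)‖ < 1 := by
    rw [norm_two_mul_div_one_add_norm_sq]
    exact two_mul_div_one_add_sq_lt_one hσ
  have hR := one_sub_conj_mul_ne_zero hβ ht
  have hN : (1 + conj σ * σ : ℂ) ≠ 0 := by
    rw [Complex.conj_mul']
    norm_cast
    positivity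
  simp only [blaschkeTwo, discMobius, ← Complex.conj_mul', map_div₀, map_mul, map_add, map_one,
    map_ofNat, map_pow, Complex.conj_conj, mul_comm σ] at hL hR ⊢
  generalize conj σ = τ at *
  rw [mul_div_assoc', div_eq_div_iff hL hR]
  generalize hD : 1 - τ * t = D at *
  generalize hE : 1 + τ * σ = E at *
  field_simp
  rw [← hD, ← hE]
  ring

lemma iteratedDeriv_inv_one_sub_mul_zero (n : ℕ) (c : ℂ) :
    iteratedDeriv n (fun z : ℂ => (1 - c * z)⁻¹) 0 = n ! * c ^ n := by
  have h : (fun z : ℂ => (1 - c * z)⁻¹) = fun z => (-c * z + 1)⁻¹ := by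
    funext z
    ring_nf
  rw [h, iteratedDeriv_eq_iterate, iter_deriv_inv_linear]
  simp only [mul_zero, zero_add, one_zpow, mul_one]
  rw [mul_right_comm, ← mul_pow]
  ring

lemma iteratedDeriv_succ_discMobius_zero (n : ℕ) (a : ℂ) :
    iteratedDeriv (n + 1) (discMobius a) 0 = -(1 - ‖a‖ ^ 2) * (n + 1)! * conj a ^ n := by
  have hcont : ContDiffAt ℂ (n + 1 : ℕ) (fun z : ℂ => (1 - conj a * z)⁻¹) 0 :=
    ContDiffAt.inv (by fun_prop) (by simp)
  have hev : discMobius a =ᶠ[𝓝 0] fun z => a + -(1 - ‖a‖ ^ 2) * (z * (1 - conj a * z)⁻¹) := by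
    have hne : ∀ᶠ z in 𝓝 (0 : ℂ), 1 - conj a * z ≠ 0 :=
      ContinuousAt.eventually_ne (by fun_prop) (by simp)
    filter_upwards [hne] with z hz
    rw [discMobius, ← Complex.conj_mul', div_eq_iff hz, add_mul, mul_assoc, mul_assoc,
      inv_mul_cancel₀ hz]
    ring
  rw [hev.iteratedDeriv_eq, iteratedDeriv_const_add (Nat.succ_pos n), iteratedDeriv_const_mul_field,
    iteratedDeriv_succ_id_mul_zero n hcont, iteratedDeriv_inv_one_sub_mul_zero, Nat.factorial_succ]
  push_cast
  ring

lemma contDiffAt_discMobius_zero (n : WithTop ℕ∞) (a : ℂ) : ContDiffAt ℂ n (discMobius a) 0 :=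
  ContDiffAt.div (by fun_prop) (by fun_prop) (by simp)

lemma contDiffAt_blaschkeTwo_zero (n : WithTop ℕ∞) (β : ℂ) : ContDiffAt ℂ n (blaschkeTwo β) 0 :=
  contDiffAt_fun_id.mul (contDiffAt_discMobius_zero n β)

lemma deriv_blaschkeTwo_zero (β : ℂ) : deriv (blaschkeTwo β) 0 = β := by
  have h := iteratedDeriv_succ_id_mul_zero 0 (contDiffAt_discMobius_zero 1 β)
  simpa only [zero_add, iteratedDeriv_one, Nat.cast_zero, one_mul, iteratedDeriv_zero,
    discMobius_zero_right] using! h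

lemma preSchwarzian_blaschkeTwo_zero (β : ℂ) :
    preSchwarzian (blaschkeTwo β) 0 = -2 * (1 - ‖β‖ ^ 2) / β := by
  rw [preSchwarzian, deriv_blaschkeTwo_zero]
  unfold blaschkeTwo
  rw [iteratedDeriv_succ_id_mul_zero 1 (contDiffAt_discMobius_zero 2 β),
    iteratedDeriv_succ_discMobius_zero]
  norm_num
  ring

lemma schwarzian_blaschkeTwo_zero (hβ : β ≠ 0) :
    schwarzian (blaschkeTwo β) 0 = -6 * (1 - ‖β‖ ^ 2) / β ^ 2 := by
  rw [schwarzian, preSchwarzian_blaschkeTwo_zero, deriv_blaschkeTwo_zero]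
  unfold blaschkeTwo
  rw [iteratedDeriv_succ_id_mul_zero 2 (contDiffAt_discMobius_zero 3 β),
    iteratedDeriv_succ_discMobius_zero, ← Complex.conj_mul']
  norm_num
  field_simp
  ring

end DiscMobius

section BranchOfRoot

variable {q : ℂ → ℂ} {c : ℂ} {R : ℝ}

lemma exists_differentiableOn_exp_eq (hR : 0 < R) (hq : DifferentiableOn ℂ q (ball c R))
    (hq₀ : ∀ z ∈ ball c R, q z ≠ 0) :
    ∃ L : ℂ → ℂ, DifferentiableOn ℂ L (ball c R) ∧ ∀ z ∈ ball c R, Complex.exp (L z) = q z := by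
  obtain ⟨L, hL⟩ := ((hq.deriv isOpen_ball).div hq hq₀).isExactOn_ball
  have hderiv : ∀ z ∈ ball c R, HasDerivAt (fun z => Complex.exp (-L z) * q z) 0 z := by
    intro z hz
    convert! ((hL z hz).neg.cexp).mul (hq.hasDerivAt (isOpen_ball.mem_nhds hz)) using 1
    have := hq₀ z hz
    simp only [Pi.div_apply]
    field_simp
    ring
  have hconst : ∀ z ∈ ball c R, Complex.exp (-L z) * q z = Complex.exp (-L c) * q c :=
    fun z hz => isOpen_ball.is_const_of_deriv_eq_zero (convex_ball c R).isPreconnected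
      (fun w hw => (hderiv w hw).differentiableAt.differentiableWithinAt)
      (fun w hw => (hderiv w hw).deriv) hz (mem_ball_self hR)
  refine ⟨fun z => L z + (Complex.log (q c) - L c), fun z hz =>
    ((hL z hz).differentiableAt.add_const _).differentiableWithinAt, fun z hz => ?_⟩
  have hqc := hq₀ c (mem_ball_self hR)
  rw [Complex.exp_add, sub_eq_neg_add, Complex.exp_add, Complex.exp_log hqc, ← hconst z hz,
    ← mul_assoc, ← Complex.exp_add, add_neg_cancel, Complex.exp_zero, one_mul]

lemma exists_differentiableOn_pow_eq (hR : 0 < R) (hq : DifferentiableOn ℂ q (ball c R))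
    (hq₀ : ∀ z ∈ ball c R, q z ≠ 0) {n : ℕ} (hn : n ≠ 0) :
    ∃ S : ℂ → ℂ, DifferentiableOn ℂ S (ball c R) ∧ ∀ z ∈ ball c R, S z ^ n = q z := by
  obtain ⟨L, hLd, hL⟩ := exists_differentiableOn_exp_eq hR hq hq₀
  refine ⟨fun z => Complex.exp (L z / n), (hLd.div_const _).cexp, fun z hz => ?_⟩
  rw [← Complex.exp_nat_mul, mul_div_cancel₀ _ (Nat.cast_ne_zero.2 hn), hL z hz]

end BranchOfRoot

/-- Univalent holomorphic self-maps of the unit disc fixing the origin, i.e. the bounded schlicht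
functions up to normalization. -/
structure IsUnivalentSelfMap (f : ℂ → ℂ) : Prop where
  differentiableOn : DifferentiableOn ℂ f (ball 0 1)
  mapsTo : MapsTo f (ball 0 1) (ball 0 1)
  injOn : InjOn f (ball 0 1)
  map_zero : f 0 = 0

namespace IsUnivalentSelfMap

variable {f g : ℂ → ℂ}

lemma norm_lt_one (hf : IsUnivalentSelfMap f) {z : ℂ} (hz : z ∈ ball (0 : ℂ) 1) : ‖f z‖ < 1 :=
  mem_ball_zero_iff.1 (hf.mapsTo hz)

lemma contDiffAt_zero (hf : IsUnivalentSelfMap f) (n : WithTop ℕ∞) : ContDiffAt ℂ n f 0 :=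
  (hf.differentiableOn.analyticAt (ball_mem_nhds 0 one_pos)).contDiffAt

lemma norm_deriv_le_one (hf : IsUnivalentSelfMap f) : ‖deriv f 0‖ ≤ 1 :=
  Complex.norm_deriv_le_one_of_mapsTo_ball hf.differentiableOn
    (by simpa only [hf.map_zero] using hf.mapsTo.mono_right ball_subset_closedBall) one_pos

/-- The Koebe transform. Taking the square root of `φ_w ∘ f`, which omits `0`, and moving its
value at the origin back to `0` gives a univalent map `g`. -/
theorem exists_eqOn_blaschkeTwo_comp (hf : IsUnivalentSelfMap f) {w : ℂ} (hw : ‖w‖ < 1)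
    (hfw : ∀ z ∈ ball (0 : ℂ) 1, f z ≠ w) :
    ∃ (σ : ℂ) (g : ℂ → ℂ), σ ^ 2 = w ∧ IsUnivalentSelfMap g ∧
      EqOn f (blaschkeTwo (2 * σ / (1 + ‖σ‖ ^ 2)) ∘ g) (ball 0 1) := by
  have hzero : (0 : ℂ) ∈ ball (0 : ℂ) 1 := mem_ball_self one_pos
  obtain ⟨S, hSd, hS⟩ := exists_differentiableOn_pow_eq one_pos
    ((differentiableOn_discMobius hw).comp hf.differentiableOn hf.mapsTo)
    (fun z hz => (discMobius_eq_zero_iff hw (hf.norm_lt_one hz)).not.2 (hfw z hz)) two_ne_zero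
  have hS_maps : MapsTo S (ball 0 1) (ball 0 1) := fun z hz => by
    rw [mem_ball_zero_iff, ← pow_lt_one_iff_of_nonneg (norm_nonneg _) two_ne_zero, ← norm_pow,
      hS z hz]
    exact norm_discMobius_lt_one hw (hf.norm_lt_one hz)
  have hσ : ‖S 0‖ < 1 := mem_ball_zero_iff.1 (hS_maps hzero)
  have hσw : S 0 ^ 2 = w := by
    rw [hS 0 hzero, Function.comp_apply, hf.map_zero, discMobius_zero_right]
  have hS_inj : InjOn S (ball 0 1) := fun z hz z' hz' h =>
    ((injOn_discMobius hw).comp hf.injOn hf.mapsTo) hz hz' (by rw [← hS z hz, h, hS z' hz'])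
  refine ⟨S 0, discMobius (S 0) ∘ S, hσw, ⟨(differentiableOn_discMobius hσ).comp hSd hS_maps,
    fun z hz => ?_, (injOn_discMobius hσ).comp hS_inj hS_maps, discMobius_self _⟩, fun z hz => ?_⟩
  · exact mem_ball_zero_iff.2 (norm_discMobius_lt_one hσ (mem_ball_zero_iff.1 (hS_maps hz)))
  · have hSz : ‖S z‖ < 1 := mem_ball_zero_iff.1 (hS_maps hz)
    rw [Function.comp_apply, Function.comp_apply, ← discMobius_sq_discMobius_sq hσ
      (norm_discMobius_lt_one hσ hSz), discMobius_discMobius hσ hSz, hσw, hS z hz,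
      Function.comp_apply, discMobius_discMobius hw (hf.norm_lt_one hz)]

end IsUnivalentSelfMap

section OmittedValue

variable {f : ℂ → ℂ} {c : ℂ} {R r : ℝ} {s U K : Set ℂ}

lemma isOpen_image_of_injOn (hf : DifferentiableOn ℂ f U) (hinj : InjOn f U) (hU : IsOpen U)
    (hUc : IsPreconnected U) (hsU : s ⊆ U) (hs : IsOpen s) : IsOpen (f '' s) := by
  rcases s.eq_empty_or_nonempty with rfl | ⟨x, hx⟩
  · simp
  obtain ⟨y, hy, hyx⟩ := (infinite_of_mem_nhds x (hs.mem_nhds hx)).nontrivial.exists_ne x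
  rcases (hf.analyticOnNhd hU).is_constant_or_isOpen hUc with ⟨w, hw⟩ | hopen
  · exact absurd (hinj (hsU hy) (hsU hx) ((hw y (hsU hy)).trans (hw x (hsU hx)).symm)) hyx
  · exact hopen s hsU hs

lemma exists_subset_image_ball_of_isCompact (hR : 0 < R) (hf : DifferentiableOn ℂ f (ball c R))
    (hinj : InjOn f (ball c R)) (hK : IsCompact K) (hKf : K ⊆ f '' ball c R) :
    ∃ ρ ∈ Ioo 0 R, K ⊆ f '' ball c ρ := by
  have : Nonempty (Ioo 0 R) := (nonempty_Ioo.2 hR).to_subtype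
  obtain ⟨⟨ρ, hρ⟩, hKρ⟩ := hK.elim_directed_cover (fun ρ : Ioo 0 R => f '' ball c ρ)
    (fun ρ => isOpen_image_of_injOn hf hinj isOpen_ball (convex_ball c R).isPreconnected
      (ball_subset_ball ρ.2.2.le) isOpen_ball)
    (fun w hw => by
      obtain ⟨z, hz, rfl⟩ := hKf hw
      obtain ⟨ρ, hzρ, hρR⟩ := exists_between (mem_ball.1 hz)
      exact mem_iUnion.2 ⟨⟨ρ, dist_nonneg.trans_lt hzρ, hρR⟩, mem_image_of_mem f hzρ⟩)
    (Monotone.directed_le fun _ _ h => image_mono (ball_subset_ball h))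
  exact ⟨ρ, hρ, hKρ⟩

lemma forall_lt_or_forall_gt_of_isPreconnected {α : Type*} [TopologicalSpace α] {s : Set α}
    (hs : IsPreconnected s) {g : α → ℝ} (hg : ContinuousOn g s) (hr : ∀ x ∈ s, g x ≠ r) :
    (∀ x ∈ s, g x < r) ∨ ∀ x ∈ s, r < g x := by
  by_contra! h
  obtain ⟨⟨x, hx, hrx⟩, y, hy, hyr⟩ := h
  obtain ⟨z, hz, hzr⟩ := hs.intermediate_value hy hx hg ⟨hyr, hrx⟩
  exact hr z hz hzr

lemma le_norm_deriv_of_forall_sphere_le_norm (hr : 0 < r) (hR : R ∈ Ioo (0 : ℝ) 1)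
    (hf : DifferentiableOn ℂ f (ball 0 1)) (hinj : InjOn f (ball 0 1)) (hf₀ : f 0 = 0)
    (hf' : deriv f 0 ≠ 0) (hfr : ∀ z ∈ sphere (0 : ℂ) R, r ≤ ‖f z‖) : r ≤ ‖deriv f 0‖ := by
  have hslope : ∀ z, f z = z * dslope f 0 z := fun z => by
    simpa [hf₀] using (sub_smul_dslope f 0 z).symm
  have hne : ∀ z ∈ ball (0 : ℂ) 1, dslope f 0 z ≠ 0 := by
    intro z hz h
    rcases eq_or_ne z 0 with rfl | hz₀
    · exact hf' (by rwa [dslope_same] at h)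
    · exact hz₀ (hinj hz (mem_ball_self one_pos) (by rw [hslope z, h, mul_zero, hf₀]))
  have hdiff : DifferentiableOn ℂ (fun z => (dslope f 0 z)⁻¹) (ball 0 1) :=
    ((Complex.differentiableOn_dslope (ball_mem_nhds 0 one_pos)).2 hf).inv hne
  have hbound : ∀ z ∈ frontier (ball (0 : ℂ) R), ‖(dslope f 0 z)⁻¹‖ ≤ r⁻¹ := by
    intro z hz
    rw [frontier_ball _ hR.1.ne'] at hz
    have hrz := hfr z hz
    rw [hslope, norm_mul, mem_sphere_zero_iff_norm.1 hz] at hrz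
    rw [norm_inv]
    exact inv_anti₀ hr (hrz.trans (mul_le_of_le_one_left (norm_nonneg _) hR.2.le))
  have hmax := Complex.norm_le_of_forall_mem_frontier_norm_le isBounded_ball
    ((hdiff.mono (closure_ball_subset_closedBall.trans
      (closedBall_subset_ball hR.2))).diffContOnCl) hbound (subset_closure (mem_ball_self hR.1))
  rw [dslope_same, norm_inv] at hmax
  exact (inv_le_inv₀ (norm_pos_iff.2 hf') hr).1 hmax

theorem exists_forall_ne_of_norm_deriv_lt (hf : DifferentiableOn ℂ f (ball 0 1))
    (hinj : InjOn f (ball 0 1)) (hf₀ : f 0 = 0) (hf' : deriv f 0 ≠ 0) (hr : ‖deriv f 0‖ < r) :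
    ∃ w : ℂ, ‖w‖ = r ∧ ∀ z ∈ ball (0 : ℂ) 1, f z ≠ w := by
  have hr₀ : 0 < r := (norm_pos_iff.2 hf').trans hr
  by_contra! hcover
  obtain ⟨ρ, hρ, hsphere⟩ := exists_subset_image_ball_of_isCompact one_pos hf hinj
    (isCompact_sphere 0 r) (fun w hw => hcover w (mem_sphere_zero_iff_norm.1 hw))
  have hsub : closedBall (0 : ℂ) ρ ⊆ ball 0 1 := closedBall_subset_ball hρ.2
  have hne : ∀ z ∈ sphere (0 : ℂ) ρ, ‖f z‖ ≠ r := by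
    intro z hz hzr
    obtain ⟨z', hz', hzz'⟩ := hsphere (mem_sphere_zero_iff_norm.2 hzr)
    obtain rfl := hinj (hsub (ball_subset_closedBall hz')) (hsub (sphere_subset_closedBall hz)) hzz'
    exact (mem_ball.1 hz').ne (mem_sphere.1 hz)
  have hpre : IsPreconnected (sphere (0 : ℂ) ρ) :=
    (isConnected_sphere (by simp [Complex.rank_real_complex]) 0 hρ.1.le).isPreconnected
  rcases forall_lt_or_forall_gt_of_isPreconnected hpre
    (hf.continuousOn.mono (sphere_subset_closedBall.trans hsub)).norm hne with hlt | hgt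
  · obtain ⟨z₀, hz₀, hmax⟩ := Complex.exists_mem_frontier_isMaxOn_norm isBounded_ball
      (nonempty_ball.2 hρ.1) (hf.mono (closure_ball_subset_closedBall.trans hsub)).diffContOnCl
    rw [frontier_ball _ hρ.1.ne'] at hz₀
    obtain ⟨z, hz, hzr⟩ := hsphere (show (r : ℂ) ∈ sphere 0 r by simp [abs_of_pos hr₀])
    have hle : ‖f z‖ ≤ ‖f z₀‖ := hmax (subset_closure hz)
    rw [hzr, Complex.norm_of_nonneg hr₀.le] at hle
    exact (hlt z₀ hz₀).not_ge hle
  · exact hr.not_ge (le_norm_deriv_of_forall_sphere_le_norm hr₀ hρ hf hinj hf₀ hf'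
      fun z hz => (hgt z hz).le)

end OmittedValue

section NearIdentity

open scoped Nat

variable {f : ℂ → ℂ} {r : ℝ}

lemma norm_iteratedDeriv_zero_le_of_re_le {R M : ℝ} (hR : 0 < R) (hM : 0 < M)
    (hf : DifferentiableOn ℂ f (ball 0 R)) (hf₀ : f 0 = 0)
    (hre : MapsTo f (ball 0 R) {z | z.re ≤ M}) (n : ℕ) :
    ‖iteratedDeriv n f 0‖ ≤ n ! * (2 * M) / (R / 2) ^ n := by
  have hsub : closedBall (0 : ℂ) (R / 2) ⊆ ball 0 R := closedBall_subset_ball (half_lt_self hR)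
  refine Complex.norm_iteratedDeriv_le_of_forall_mem_sphere_norm_le n (half_pos hR)
    (hf.mono (closure_ball_subset_closedBall.trans hsub)).diffContOnCl fun z hz => ?_
  have hz' := Complex.borelCaratheodory_zero hM hf hre hR
    (hsub (sphere_subset_closedBall hz)) hf₀
  rw [mem_sphere_zero_iff_norm.1 hz] at hz'
  exact hz'.trans_eq (by field_simp; ring)

lemma norm_iteratedDeriv_div_deriv_le (hf : DifferentiableOn ℂ f (ball 0 1))
    (hmaps : MapsTo f (ball 0 1) (closedBall (f 0) 1)) (hr : r ∈ Ioo (0 : ℝ) 1)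
    (hrf : r ≤ ‖deriv f 0‖) {n : ℕ} (hn : n ≠ 0) :
    ‖iteratedDeriv (n + 1) f 0 / deriv f 0‖ ≤ (n + 1)! * 2 ^ (n + 1) * (1 / r - 1) := by
  have hf' : 0 < ‖deriv f 0‖ := hr.1.trans_le hrf
  have hdslope : DifferentiableOn ℂ (dslope f 0) (ball 0 1) :=
    (Complex.differentiableOn_dslope (ball_mem_nhds 0 one_pos)).2 hf
  set H : ℂ → ℂ := fun z => -1 + (deriv f 0)⁻¹ * dslope f 0 z with hH
  have hiter : iteratedDeriv (n + 1) f 0 / deriv f 0 = (n + 1) * iteratedDeriv n H 0 := by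
    rw [hH, iteratedDeriv_const_add (Nat.pos_of_ne_zero hn), iteratedDeriv_const_mul_field,
      iteratedDeriv_succ_zero_eq_iteratedDeriv_dslope n
        (hdslope.analyticAt (ball_mem_nhds 0 one_pos)).contDiffAt]
    ring
  have hre : MapsTo H (ball 0 1) {z | z.re ≤ 1 / r - 1} := by
    intro z hz
    have hle : ‖dslope f 0 z‖ ≤ 1 := by
      simpa using Complex.norm_dslope_le_div_of_mapsTo_ball hf hmaps hz
    have hnorm : ‖(deriv f 0)⁻¹ * dslope f 0 z‖ ≤ 1 / r := by
      rw [norm_mul, norm_inv, ← div_eq_inv_mul]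
      exact div_le_div₀ zero_le_one hle hr.1 hrf
    simp only [hH, mem_ofPred_eq, Complex.add_re, Complex.neg_re, Complex.one_re]
    linarith [Complex.re_le_norm ((deriv f 0)⁻¹ * dslope f 0 z)]
  have hbound := norm_iteratedDeriv_zero_le_of_re_le one_pos
    (sub_pos.2 ((one_lt_div hr.1).2 hr.2)) (by fun_prop)
    (by simp [hH, dslope_same, inv_mul_cancel₀ (norm_pos_iff.1 hf')]) hre n
  rw [hiter, norm_mul, Nat.factorial_succ]
  calc ‖(n + 1 : ℂ)‖ * ‖iteratedDeriv n H 0‖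
      ≤ (n + 1) * (n ! * (2 * (1 / r - 1)) / (1 / 2) ^ n) := by
        gcongr
        exact_mod_cast (Complex.norm_natCast (n + 1)).le
    _ = ((n + 1) * n ! : ℕ) * 2 ^ (n + 1) * (1 / r - 1) := by
        rw [one_div_pow, div_div_eq_mul_div]
        push_cast
        ring

lemma norm_preSchwarzian_zero_le (hf : DifferentiableOn ℂ f (ball 0 1))
    (hmaps : MapsTo f (ball 0 1) (closedBall (f 0) 1)) (hr : r ∈ Ioo (0 : ℝ) 1)
    (hrf : r ≤ ‖deriv f 0‖) : ‖preSchwarzian f 0‖ ≤ 8 * (1 / r - 1) :=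
  (norm_iteratedDeriv_div_deriv_le hf hmaps hr hrf one_ne_zero).trans_eq (by norm_num)

lemma norm_schwarzian_zero_le (hf : DifferentiableOn ℂ f (ball 0 1))
    (hmaps : MapsTo f (ball 0 1) (closedBall (f 0) 1)) (hr : r ∈ Ioo (0 : ℝ) 1)
    (hrf : r ≤ ‖deriv f 0‖) :
    ‖schwarzian f 0‖ ≤ 48 * (1 / r - 1) + 96 * (1 / r - 1) ^ 2 := by
  have hP := norm_preSchwarzian_zero_le hf hmaps hr hrf
  calc ‖schwarzian f 0‖
      ≤ ‖iteratedDeriv 3 f 0 / deriv f 0‖ + ‖(3 / 2 : ℂ)‖ * ‖preSchwarzian f 0‖ ^ 2 := by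
        rw [← norm_pow, ← norm_mul]
        exact norm_sub_le _ _
    _ ≤ (2 + 1)! * 2 ^ (2 + 1) * (1 / r - 1) + 3 / 2 * (8 * (1 / r - 1)) ^ 2 := by
        gcongr
        · exact norm_iteratedDeriv_div_deriv_le hf hmaps hr hrf two_ne_zero
        · norm_num
    _ = 48 * (1 / r - 1) + 96 * (1 / r - 1) ^ 2 := by norm_num; ring

end NearIdentity

/-- The Lyapunov function of the Koebe transform: a combination of the Schwarzian and pre-Schwarzian
derivatives at the origin and of a function of `‖f' 0‖`. It does not decrease when `f` is replaced
by its Koebe transform `g`, where `f = blaschkeTwo β ∘ g` and `b = ‖β‖`. -/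
def koebeLyapunov (m b : ℝ) (f : ℂ → ℂ) : ℝ :=
  (schwarzian f 0).re / 6 - 2 * m / b ^ 2 * (preSchwarzian f 0).re +
    (‖deriv f 0‖ ^ 2 / b ^ 2 + 4 / b ^ 4 * logPotential m ‖deriv f 0‖)

section KoebeLyapunov

open scoped Topology

variable {m b : ℝ} {f g : ℂ → ℂ}

lemma koebeLyapunov_congr (h : f =ᶠ[𝓝 0] g) : koebeLyapunov m b f = koebeLyapunov m b g := by
  simp only [koebeLyapunov, schwarzian, preSchwarzian, h.iteratedDeriv_eq, h.deriv_eq]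

lemma le_koebeLyapunov (hm : 0 ≤ m) :
    (schwarzian f 0).re / 6 - 2 * m / b ^ 2 * (preSchwarzian f 0).re ≤ koebeLyapunov m b f := by
  have := logPotential_nonneg hm (norm_nonneg (deriv f 0))
  rw [koebeLyapunov, le_add_iff_nonneg_right]
  positivity

lemma norm_deriv_blaschkeTwo_comp_zero {β : ℂ} (hg₀ : g 0 = 0) (hg : DifferentiableAt ℂ g 0) :
    ‖deriv (blaschkeTwo β ∘ g) 0‖ = ‖β‖ * ‖deriv g 0‖ := by
  rw [deriv_comp 0 (hg₀.symm ▸ (contDiffAt_blaschkeTwo_zero 1 β).differentiableAt one_ne_zero) hg,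
    hg₀, deriv_blaschkeTwo_zero, norm_mul]

lemma one_sub_sq_mul_le_logPotential_sub (hm : 0 ≤ m) (hb : 0 < b) (hb1 : b ≤ 1) {v y : ℝ}
    (hy : 0 < y) (hv : b * v ≤ y) :
    (1 - b ^ 2) * (4 * m / b ^ 2 * v - 2 * v ^ 2) ≤
      4 / b ^ 4 * (logPotential m y - logPotential m (b * y)) := by
  have hV : b ^ 2 * v ≤ b * y := by
    rw [sq, mul_assoc]
    exact mul_le_mul_of_nonneg_left hv hb.le
  have hrate : 0 ≤ logPotentialRate m (b * y) := logPotentialRate_nonneg hm (mul_pos hb hy).le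
  have hb2 : 0 ≤ 1 - b ^ 2 := sub_nonneg.2 (pow_le_one₀ hb.le hb1)
  calc (1 - b ^ 2) * (4 * m / b ^ 2 * v - 2 * v ^ 2)
      = 2 / b ^ 4 * ((1 - b ^ 2) * (2 * m * (b ^ 2 * v) - (b ^ 2 * v) ^ 2)) := by
        field_simp
        ring
    _ ≤ 2 / b ^ 4 * ((1 - b ^ 2) * logPotentialRate m (b * y)) := by
        gcongr
        exact two_mul_sub_sq_le_logPotentialRate hV
    _ ≤ 2 / b ^ 4 * (2 * (1 - b) * logPotentialRate m (b * y)) := by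
        gcongr
        nlinarith
    _ = 4 / b ^ 4 * ((1 - b * y / y) * logPotentialRate m (b * y)) := by
        rw [mul_div_cancel_right₀ _ hy.ne']
        ring
    _ ≤ 4 / b ^ 4 * (logPotential m y - logPotential m (b * y)) := by
        gcongr
        exact mul_logPotentialRate_le_sub hm (mul_pos hb hy) (mul_le_of_le_one_left hy.le hb1)

lemma koebeLyapunov_blaschkeTwo_comp_le (hm : 0 ≤ m) {β : ℂ} (hβ : β ≠ 0) (hβ1 : ‖β‖ ≤ 1)
    (hg : ContDiffAt ℂ 3 g 0) (hg₀ : g 0 = 0) (hg' : deriv g 0 ≠ 0) :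
    koebeLyapunov m ‖β‖ (blaschkeTwo β ∘ g) ≤ koebeLyapunov m ‖β‖ g := by
  have hβ' : deriv (blaschkeTwo β) (g 0) ≠ 0 := by rwa [hg₀, deriv_blaschkeTwo_zero]
  have hB (n : WithTop ℕ∞) : ContDiffAt ℂ n (blaschkeTwo β) (g 0) :=
    hg₀.symm ▸ contDiffAt_blaschkeTwo_zero n β
  have hb : 0 < ‖β‖ := norm_pos_iff.2 hβ
  have hy : 0 < ‖deriv g 0‖ := norm_pos_iff.2 hg'
  set q : ℂ := deriv g 0 / β with hq
  have hP : preSchwarzian (blaschkeTwo β ∘ g) 0 =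
      preSchwarzian g 0 - ((2 * (1 - ‖β‖ ^ 2) : ℝ) : ℂ) * q := by
    rw [preSchwarzian_comp (hB 2) (hg.of_le (by norm_num)) hβ' hg', hg₀,
      preSchwarzian_blaschkeTwo_zero, hq]
    push_cast
    ring
  have hS : schwarzian (blaschkeTwo β ∘ g) 0 =
      schwarzian g 0 - ((6 * (1 - ‖β‖ ^ 2) : ℝ) : ℂ) * q ^ 2 := by
    rw [schwarzian_comp (hB 3) hg hβ' hg', hg₀, schwarzian_blaschkeTwo_zero hβ, hq]
    push_cast
    ring
  have hq_norm : ‖β‖ * ‖q‖ = ‖deriv g 0‖ := by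
    rw [hq, norm_div, mul_div_cancel₀ _ hb.ne']
  have hq_re : (q ^ 2).re = 2 * q.re ^ 2 - ‖q‖ ^ 2 := by
    rw [Complex.sq_norm, Complex.normSq_apply, sq q, Complex.mul_re]
    ring
  have hv : ‖β‖ * q.re ≤ ‖deriv g 0‖ :=
    (mul_le_mul_of_nonneg_left (Complex.re_le_norm q) hb.le).trans_eq hq_norm
  have hU := one_sub_sq_mul_le_logPotential_sub hm hb hβ1 hy hv
  rw [koebeLyapunov, koebeLyapunov, hP, hS,
    norm_deriv_blaschkeTwo_comp_zero hg₀ (hg.differentiableAt (by norm_num)), Complex.sub_re,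
    Complex.sub_re, Complex.re_ofReal_mul, Complex.re_ofReal_mul, hq_re]
  have hsq : (1 - ‖β‖ ^ 2) * ‖q‖ ^ 2 =
      ‖deriv g 0‖ ^ 2 / ‖β‖ ^ 2 - (‖β‖ * ‖deriv g 0‖) ^ 2 / ‖β‖ ^ 2 := by
    rw [← hq_norm]
    field_simp
  linear_combination hU + hsq

end KoebeLyapunov

namespace IsUnivalentSelfMap

open scoped Topology

variable {f : ℂ → ℂ} {m s : ℝ}

lemma exists_koebeLyapunov_le_of_norm_deriv_lt (hf : IsUnivalentSelfMap f) (hf' : deriv f 0 ≠ 0)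
    (hm : 0 ≤ m) (hs : s ∈ Ioo (0 : ℝ) 1) (hfs : ‖deriv f 0‖ < s ^ 2) :
    ∃ g, IsUnivalentSelfMap g ∧ ‖deriv f 0‖ = 2 * s / (1 + s ^ 2) * ‖deriv g 0‖ ∧
      koebeLyapunov m (2 * s / (1 + s ^ 2)) f ≤ koebeLyapunov m (2 * s / (1 + s ^ 2)) g := by
  obtain ⟨w, hw, hfw⟩ := exists_forall_ne_of_norm_deriv_lt hf.differentiableOn hf.injOn
    hf.map_zero hf' hfs
  obtain ⟨σ, g, rfl, hg, hfg⟩ := hf.exists_eqOn_blaschkeTwo_comp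
    (hw.trans_lt (pow_lt_one₀ hs.1.le hs.2 two_ne_zero)) hfw
  rw [norm_pow, pow_left_inj₀ (norm_nonneg σ) hs.1.le two_ne_zero] at hw
  have hβ : ‖2 * σ / (1 + ‖σ‖ ^ 2)‖ = 2 * s / (1 + s ^ 2) := by
    rw [norm_two_mul_div_one_add_norm_sq, hw]
  generalize 2 * σ / (1 + (‖σ‖ : ℂ) ^ 2) = β at hβ hfg
  have hb1 : ‖β‖ < 1 := hβ.trans_lt (two_mul_div_one_add_sq_lt_one hs.2)
  have hfg' : f =ᶠ[𝓝 0] blaschkeTwo β ∘ g :=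
    Filter.eventuallyEq_of_mem (ball_mem_nhds 0 one_pos) hfg
  have hnorm : ‖deriv f 0‖ = ‖β‖ * ‖deriv g 0‖ := by
    rw [hfg'.deriv_eq, norm_deriv_blaschkeTwo_comp_zero hg.map_zero
      ((hg.contDiffAt_zero 1).differentiableAt one_ne_zero)]
  have hβ₀ : β ≠ 0 := fun h => hf' (by simpa [h] using hnorm)
  have hg' : deriv g 0 ≠ 0 := fun h => hf' (by simpa [h] using hnorm)
  refine ⟨g, hg, hβ ▸ hnorm, ?_⟩
  rw [koebeLyapunov_congr hfg', ← hβ]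
  exact koebeLyapunov_blaschkeTwo_comp_le hm hβ₀ hb1.le (hg.contDiffAt_zero 3) hg.map_zero hg'

lemma exists_koebeLyapunov_le (hf : IsUnivalentSelfMap f) (hf' : deriv f 0 ≠ 0) (hm : 0 ≤ m)
    (hs : s ∈ Ioo (0 : ℝ) 1) :
    ∃ g, IsUnivalentSelfMap g ∧ s ^ 2 ≤ ‖deriv g 0‖ ∧
      koebeLyapunov m (2 * s / (1 + s ^ 2)) f ≤ koebeLyapunov m (2 * s / (1 + s ^ 2)) g := by
  have hs₀ : 0 < s := hs.1
  have hb : 0 < 2 * s / (1 + s ^ 2) := by positivity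
  obtain ⟨n, hn⟩ := exists_pow_lt_of_lt_one (div_pos (norm_pos_iff.2 hf') (sq_pos_of_pos hs₀))
    (two_mul_div_one_add_sq_lt_one hs.2)
  rw [lt_div_iff₀' (sq_pos_of_pos hs₀)] at hn
  induction n generalizing f with
  | zero => exact ⟨f, hf, by simpa using hn.le, le_rfl⟩
  | succ n ih =>
    by_cases hlt : s ^ 2 ≤ ‖deriv f 0‖
    · exact ⟨f, hf, hlt, le_rfl⟩
    obtain ⟨g, hg, hnorm, hfg⟩ :=
      hf.exists_koebeLyapunov_le_of_norm_deriv_lt hf' hm hs (not_le.1 hlt)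
    have hg' : deriv g 0 ≠ 0 := fun h => hf' (by simpa [h] using hnorm)
    rw [hnorm, pow_succ' (2 * s / _), mul_left_comm, mul_lt_mul_iff_right₀ hb] at hn
    obtain ⟨k, hk, hsk, hgk⟩ := ih hg hg' hn
    exact ⟨k, hk, hsk, hfg.trans hgk⟩

lemma koebeLyapunov_le (hf : IsUnivalentSelfMap f) (hm : 0 ≤ m) {b r : ℝ}
    (hr : r ∈ Ioo (0 : ℝ) 1) (hrf : r ≤ ‖deriv f 0‖) :
    koebeLyapunov m b f ≤ 8 * (1 / r - 1) + 16 * (1 / r - 1) ^ 2 +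
      2 * m / b ^ 2 * (8 * (1 / r - 1)) + (1 / b ^ 2 + 4 / b ^ 4 * logPotential m 1) := by
  have hmaps : MapsTo f (ball 0 1) (closedBall (f 0) 1) :=
    hf.map_zero.symm ▸ hf.mapsTo.mono_right ball_subset_closedBall
  have hS : (schwarzian f 0).re / 6 ≤ 8 * (1 / r - 1) + 16 * (1 / r - 1) ^ 2 := by
    linarith [(Complex.re_le_norm _).trans
      (norm_schwarzian_zero_le hf.differentiableOn hmaps hr hrf)]
  have hP : -(preSchwarzian f 0).re ≤ 8 * (1 / r - 1) :=
    (neg_le_abs _).trans ((Complex.abs_re_le_norm _).trans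
      (norm_preSchwarzian_zero_le hf.differentiableOn hmaps hr hrf))
  rw [koebeLyapunov, sub_eq_add_neg, ← mul_neg]
  gcongr
  · exact pow_le_one₀ (norm_nonneg _) hf.norm_deriv_le_one
  · exact logPotential_le_logPotential hm (hr.1.trans_le hrf) hf.norm_deriv_le_one

theorem re_schwarzian_sub_re_preSchwarzian_le (hf : IsUnivalentSelfMap f) (hf' : deriv f 0 ≠ 0)
    (hm : 0 ≤ m) :
    (schwarzian f 0).re / 6 - 2 * m * (preSchwarzian f 0).re ≤ 1 + 4 * logPotential m 1 := by
  let b : ℝ → ℝ := fun s => 2 * s / (1 + s ^ 2)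
  let bound : ℝ → ℝ := fun s => 8 * (1 / s ^ 2 - 1) + 16 * (1 / s ^ 2 - 1) ^ 2 +
      2 * m / b s ^ 2 * (8 * (1 / s ^ 2 - 1)) + (1 / b s ^ 2 + 4 / b s ^ 4 * logPotential m 1)
  have hle : ∀ᶠ s in 𝓝[<] (1 : ℝ),
      (schwarzian f 0).re / 6 - 2 * m / b s ^ 2 * (preSchwarzian f 0).re ≤ bound s := by
    filter_upwards [Ioo_mem_nhdsLT one_pos] with s hs
    obtain ⟨g, hg, hsg, hfg⟩ := hf.exists_koebeLyapunov_le hf' hm hs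
    exact (le_koebeLyapunov hm).trans (hfg.trans (hg.koebeLyapunov_le hm
      ⟨sq_pos_of_pos hs.1, pow_lt_one₀ hs.1.le hs.2 two_ne_zero⟩ hsg))
  have hb_one : b 1 = 1 := by norm_num [b]
  have hb : ContinuousAt b 1 := ContinuousAt.div (by fun_prop) (by fun_prop) (by norm_num)
  have hlim : ContinuousAt bound 1 := by
    simp only [bound]
    fun_prop (disch := simp [hb_one])
  have hlim' : ContinuousAt
      (fun s => (schwarzian f 0).re / 6 - 2 * m / b s ^ 2 * (preSchwarzian f 0).re) 1 := by
    fun_prop (disch := simp [hb_one])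
  simpa [bound, hb_one] using le_of_tendsto_of_tendsto (hlim'.mono_left nhdsWithin_le_nhds)
    (hlim.mono_left nhdsWithin_le_nhds) hle

end IsUnivalentSelfMap

section FeketeSzego

open scoped Topology

variable {f : ℂ → ℂ} {m μ : ℝ}

lemma mapsTo_const_mul_ball {𝕜 : Type*} [NormedField 𝕜] {c : 𝕜} (hc : ‖c‖ ≤ 1) (R : ℝ) :
    MapsTo (fun z : 𝕜 => c * z) (ball 0 R) (ball 0 R) := fun z hz => by
  rw [mem_ball_zero_iff] at hz ⊢
  exact (norm_mul c z).trans_lt ((mul_le_of_le_one_left (norm_nonneg z) hc).trans_lt hz)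

lemma exists_isUnivalentSelfMap_const_mul_comp {ρ : ℝ} (hρ : ρ ∈ Ioo (0 : ℝ) 1)
    (hf : DifferentiableOn ℂ f (ball 0 1)) (hinj : InjOn f (ball 0 1)) (hf₀ : f 0 = 0) :
    ∃ a : ℂ, a ≠ 0 ∧ IsUnivalentSelfMap fun z => a * f (ρ * z) := by
  have hmaps : MapsTo (fun z : ℂ => ρ * z) (ball 0 1) (ball 0 1) :=
    mapsTo_const_mul_ball (by simpa [abs_of_pos hρ.1] using hρ.2.le) 1
  obtain ⟨C, hC⟩ := (isCompact_closedBall (0 : ℂ) ρ).exists_bound_of_continuousOn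
    (hf.continuousOn.mono (closedBall_subset_ball hρ.2))
  have hC₀ : 0 ≤ C := (norm_nonneg _).trans (hC 0 (mem_closedBall_self hρ.1.le))
  have ha : ((C + 1 : ℝ) : ℂ)⁻¹ ≠ 0 := inv_ne_zero (Complex.ofReal_ne_zero.2 (by positivity))
  refine ⟨_, ha, (hf.comp (by fun_prop) hmaps).const_mul _, fun z hz => ?_,
    fun z hz z' hz' h => ?_, by simp [hf₀]⟩
  · have hz' : (ρ * z : ℂ) ∈ closedBall (0 : ℂ) ρ := by
      rw [mem_closedBall_zero_iff, norm_mul, Complex.norm_of_nonneg hρ.1.le]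
      exact mul_le_of_le_one_right hρ.1.le (mem_ball_zero_iff.1 hz).le
    rw [mem_ball_zero_iff, norm_mul, norm_inv, Complex.norm_of_nonneg (by positivity),
      inv_mul_lt_one₀ (by positivity)]
    linarith [hC _ hz']
  · exact mul_left_cancel₀ (Complex.ofReal_ne_zero.2 hρ.1.ne')
      (hinj (hmaps hz) (hmaps hz') (mul_left_cancel₀ ha h))

lemma re_schwarzian_sub_re_preSchwarzian_le_of_injOn (hf : DifferentiableOn ℂ f (ball 0 1))
    (hinj : InjOn f (ball 0 1)) (hf₀ : f 0 = 0) (hf' : deriv f 0 ≠ 0) (hm : 0 ≤ m) :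
    (schwarzian f 0).re / 6 - 2 * m * (preSchwarzian f 0).re ≤ 1 + 4 * logPotential m 1 := by
  have hle : ∀ᶠ ρ in 𝓝[<] (1 : ℝ), ρ ^ 2 * (schwarzian f 0).re / 6 -
      2 * m * (ρ * (preSchwarzian f 0).re) ≤ 1 + 4 * logPotential m 1 := by
    filter_upwards [Ioo_mem_nhdsLT one_pos] with ρ hρ
    obtain ⟨a, ha, hfa⟩ := exists_isUnivalentSelfMap_const_mul_comp hρ hf hinj hf₀
    have hderiv : deriv (fun z => a * f (ρ * z)) 0 ≠ 0 := by
      rw [deriv_const_mul_comp_const_mul, mul_zero]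
      exact mul_ne_zero ha (mul_ne_zero (Complex.ofReal_ne_zero.2 hρ.1.ne') hf')
    have := hfa.re_schwarzian_sub_re_preSchwarzian_le hderiv hm
    rwa [schwarzian_const_mul_comp_const_mul ha, preSchwarzian_const_mul_comp_const_mul ha,
      mul_zero, ← Complex.ofReal_pow, Complex.re_ofReal_mul, Complex.re_ofReal_mul] at this
  have hlim : ContinuousAt (fun ρ : ℝ => ρ ^ 2 * (schwarzian f 0).re / 6 -
      2 * m * (ρ * (preSchwarzian f 0).re)) 1 := by fun_prop
  simpa using le_of_tendsto (hlim.mono_left nhdsWithin_le_nhds) hle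

lemma re_schwarzian_add_abs_re_preSchwarzian_le (hf : DifferentiableOn ℂ f (ball 0 1))
    (hinj : InjOn f (ball 0 1)) (hf₀ : f 0 = 0) (hf' : deriv f 0 ≠ 0) (hm : 0 ≤ m) :
    (schwarzian f 0).re / 6 + 2 * m * |(preSchwarzian f 0).re| ≤ 1 + 4 * logPotential m 1 := by
  rcases abs_choice (preSchwarzian f 0).re with h | h <;> rw [h]
  · have hmaps : MapsTo (fun z : ℂ => -1 * z) (ball 0 1) (ball 0 1) :=
      mapsTo_const_mul_ball (by simp) 1
    have := re_schwarzian_sub_re_preSchwarzian_le_of_injOn (f := fun z => 1 * f (-1 * z))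
      ((hf.comp (by fun_prop) hmaps).const_mul 1)
      (fun z hz z' hz' hzz' => by simpa using hinj (hmaps hz) (hmaps hz') (by simpa using hzz'))
      (by simp [hf₀]) (by rw [deriv_const_mul_comp_const_mul]; simpa using hf') hm
    rw [schwarzian_const_mul_comp_const_mul one_ne_zero,
      preSchwarzian_const_mul_comp_const_mul one_ne_zero] at this
    simpa using this
  · have := re_schwarzian_sub_re_preSchwarzian_le_of_injOn hf hinj hf₀ hf' hm
    linarith

lemma abs_re_preSchwarzian_zero_le_four (hf : DifferentiableOn ℂ f (ball 0 1))
    (hinj : InjOn f (ball 0 1)) (hf₀ : f 0 = 0) (hf' : deriv f 0 ≠ 0) :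
    |(preSchwarzian f 0).re| ≤ 4 := by
  by_contra! hlt
  set d := |(preSchwarzian f 0).re| - 4 with hd
  have hd₀ : 0 < d := sub_pos.2 hlt
  set m : ℝ := 1 + |(schwarzian f 0).re| / d with hm
  have hm1 : 1 ≤ m := by
    rw [hm, le_add_iff_nonneg_right]
    positivity
  have hle := re_schwarzian_add_abs_re_preSchwarzian_le hf hinj hf₀ hf' (zero_le_one.trans hm1)
  rw [logPotential_of_le hm1] at hle
  have hmd : m * d = d + |(schwarzian f 0).re| := by
    rw [hm]
    field_simp
  have hmd' : m * d = m * |(preSchwarzian f 0).re| - 4 * m := by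
    rw [hd]
    ring
  linarith [hmd, hmd', neg_abs_le (schwarzian f 0).re, abs_nonneg (schwarzian f 0).re]

lemma re_schwarzian_add_sq_re_preSchwarzian_le (hf : DifferentiableOn ℂ f (ball 0 1))
    (hinj : InjOn f (ball 0 1)) (hf₀ : f 0 = 0) (hf' : deriv f 0 ≠ 0) (hμ : 0 < μ) (hμ1 : μ ≤ 1) :
    (schwarzian f 0).re / 6 + μ * (preSchwarzian f 0).re ^ 2 / 4 ≤
      1 + 2 * Real.exp (-2 * (1 / μ - 1)) := by
  have hy : |(preSchwarzian f 0).re| / 4 ∈ Icc (0 : ℝ) 1 :=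
    ⟨by positivity, (div_le_one four_pos).2 (abs_re_preSchwarzian_zero_le_four hf hinj hf₀ hf')⟩
  obtain ⟨m, hm, hmy⟩ := exists_sub_mul_log_eq hy
  have hle := re_schwarzian_add_abs_re_preSchwarzian_le hf hinj hf₀ hf' hm.1
  have hexp := sq_mul_one_sub_log_quadratic_le_exp hm hμ hμ1
  have habs : |(preSchwarzian f 0).re| = 4 * (m - m * Real.log m) := by
    rw [hmy]
    ring
  rw [logPotential_of_ge hm.2, one_div, Real.log_inv, habs] at hle
  rw [← sq_abs, habs]
  linarith

lemma norm_schwarzian_add_sq_preSchwarzian_le (hf : DifferentiableOn ℂ f (ball 0 1))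
    (hinj : InjOn f (ball 0 1)) (hf₀ : f 0 = 0) (hf' : deriv f 0 ≠ 0) (hμ : 0 < μ) (hμ1 : μ ≤ 1) :
    ‖schwarzian f 0 / 6 + μ * preSchwarzian f 0 ^ 2 / 4‖ ≤ 1 + 2 * Real.exp (-2 * (1 / μ - 1)) := by
  set Φ : ℂ := schwarzian f 0 / 6 + μ * preSchwarzian f 0 ^ 2 / 4 with hΦ
  rcases eq_or_ne Φ 0 with h₀ | h₀
  · rw [h₀, norm_zero]
    positivity
  obtain ⟨η, hη⟩ := IsAlgClosed.exists_pow_nat_eq (‖Φ‖ / Φ) two_pos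
  have hη_norm : ‖η‖ = 1 := by
    rw [← pow_eq_one_iff_of_nonneg (norm_nonneg η) two_ne_zero, ← norm_pow, hη, norm_div,
      Complex.norm_real, norm_norm, div_self (norm_ne_zero_iff.2 h₀)]
  have hη₀ : η ≠ 0 := norm_ne_zero_iff.1 (by simp [hη_norm])
  have hmaps := mapsTo_const_mul_ball hη_norm.le 1
  have hle := re_schwarzian_add_sq_re_preSchwarzian_le (f := fun z => 1 * f (η * z))
    ((hf.comp (by fun_prop) hmaps).const_mul 1)
    (fun z hz z' hz' hzz' =>
      mul_left_cancel₀ hη₀ (hinj (hmaps hz) (hmaps hz') (by simpa using hzz')))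
    (by simp [hf₀]) (by rw [deriv_const_mul_comp_const_mul]; simpa [hη₀] using hf') hμ hμ1
  rw [schwarzian_const_mul_comp_const_mul one_ne_zero,
    preSchwarzian_const_mul_comp_const_mul one_ne_zero, mul_zero] at hle
  have hre_sq : ∀ z : ℂ, (z ^ 2).re ≤ z.re ^ 2 := fun z => by
    rw [sq, Complex.mul_re]
    linarith [mul_self_nonneg z.im]
  calc ‖Φ‖ = (η ^ 2 * Φ).re := by rw [hη, div_mul_cancel₀ _ h₀, Complex.ofReal_re]
    _ = (η ^ 2 * schwarzian f 0).re / 6 + μ * ((η * preSchwarzian f 0) ^ 2).re / 4 := by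
        rw [← Complex.re_ofReal_mul, ← Complex.div_ofNat_re, ← Complex.div_ofNat_re,
          ← Complex.add_re, hΦ]
        congr 1
        ring
    _ ≤ (η ^ 2 * schwarzian f 0).re / 6 + μ * (η * preSchwarzian f 0).re ^ 2 / 4 := by
        gcongr
        exact hre_sq _
    _ ≤ 1 + 2 * Real.exp (-2 * (1 / μ - 1)) := hle

theorem norm_coeff_three_sub_mul_sq_coeff_two_le {lam : ℝ}
    (hf : DifferentiableOn ℂ f (ball 0 1)) (hinj : InjOn f (ball 0 1)) (hf₀ : f 0 = 0)
    (hf' : deriv f 0 = 1) (hlam : lam ∈ Ico (0 : ℝ) 1) :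
    ‖iteratedDeriv 3 f 0 / 6 - lam * (iteratedDeriv 2 f 0 / 2) ^ 2‖ ≤
      1 + 2 * Real.exp (-(2 * lam) / (1 - lam)) := by
  have hpos : 0 < 1 - lam := sub_pos.2 hlam.2
  have hexp : -(2 * lam) / (1 - lam) = -2 * (1 / (1 - lam) - 1) := by
    field_simp
    ring
  have hcoeff : iteratedDeriv 3 f 0 / 6 - lam * (iteratedDeriv 2 f 0 / 2) ^ 2 =
      schwarzian f 0 / 6 + (1 - lam : ℝ) * preSchwarzian f 0 ^ 2 / 4 := by
    rw [schwarzian, preSchwarzian, hf']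
    push_cast
    ring
  rw [hcoeff, hexp]
  exact norm_schwarzian_add_sq_preSchwarzian_le hf hinj hf₀ (hf' ▸ one_ne_zero) hpos
    (sub_le_self 1 hlam.1)

end FeketeSzego

section HolomorphicSmooth

open Filter
open scoped Topology

variable {V W : Type*} [NormedAddCommGroup V] [NormedSpace ℂ V] [NormedAddCommGroup W]
  [NormedSpace ℂ W] {F : V → W} {s : Set V} {x : V} {r R K M : ℝ}

lemma norm_fderiv_le_of_forall_mem_ball_norm_le (hR : 0 < R)
    (hF : DifferentiableOn ℂ F (ball x R)) (hM : ∀ y ∈ ball x R, ‖F y‖ ≤ M) :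
    ‖fderiv ℂ F x‖ ≤ 2 * M / R := by
  refine Complex.norm_fderiv_le_div_of_mapsTo_ball hF (fun y hy => ?_) hR
  rw [mem_closedBall, dist_eq_norm]
  linarith [norm_sub_le (F y) (F x), hM y hy, hM x (mem_ball_self hR)]

lemma norm_fderiv_le_of_forall_mem_ball_add_norm_le (hr : 0 < r)
    (hF : DifferentiableOn ℂ F (ball x (R + r))) (hM : ∀ y ∈ ball x (R + r), ‖F y‖ ≤ M) :
    ∀ y ∈ ball x R, ‖fderiv ℂ F y‖ ≤ 2 * M / r := fun y hy => by
  have hsub : ball y r ⊆ ball x (R + r) := ball_subset_ball' (by linarith [mem_ball.1 hy])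
  exact norm_fderiv_le_of_forall_mem_ball_norm_le hr (hF.mono hsub) fun v hv => hM v (hsub hv)

lemma norm_fderiv_sub_le_of_forall_mem_ball_norm_sub_le (hr : 0 < r)
    (hF : DifferentiableOn ℂ F (ball x (R + r)))
    (hK : ∀ y ∈ ball x (R + r), ∀ z ∈ ball x (R + r), ‖F z - F y‖ ≤ K * ‖z - y‖) :
    ∀ y ∈ ball x R, ∀ z ∈ ball x R,
      ‖fderiv ℂ F z - fderiv ℂ F y‖ ≤ 2 * K / r * ‖z - y‖ := fun y hy z hz => by
  have hmem : ∀ w ∈ ball x R, ∀ v ∈ ball (0 : V) r, v + w ∈ ball x (R + r) := fun w hw v hv => by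
    rw [mem_ball_iff_norm] at hw ⊢
    rw [mem_ball_zero_iff] at hv
    rw [add_sub_assoc]
    linarith [norm_add_le v (w - x)]
  have hdiff : ∀ w ∈ ball x R, ∀ v ∈ ball (0 : V) r, DifferentiableAt ℂ (fun v => F (v + w)) v :=
    fun w hw v hv => (differentiableAt_comp_add_right w).2
      (hF.differentiableAt (isOpen_ball.mem_nhds (hmem w hw v hv)))
  have hcauchy := norm_fderiv_le_of_forall_mem_ball_norm_le (F := fun v => F (v + z) - F (v + y))
    (M := K * ‖z - y‖) hr
    (fun v hv => ((hdiff z hz v hv).sub (hdiff y hy v hv)).differentiableWithinAt)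
    (fun v hv => by simpa using hK _ (hmem y hy v hv) _ (hmem z hz v hv))
  have h₀ : (0 : V) ∈ ball (0 : V) r := mem_ball_self hr
  rw [fderiv_fun_sub (hdiff z hz 0 h₀) (hdiff y hy 0 h₀), fderiv_comp_add_right,
    fderiv_comp_add_right, zero_add, zero_add] at hcauchy
  exact hcauchy.trans_eq (by ring)

lemma norm_sub_sub_fderiv_le_sq (hF : DifferentiableOn ℂ F (ball x R)) (hK₀ : 0 ≤ K)
    (hK : ∀ y ∈ ball x R, ∀ z ∈ ball x R, ‖fderiv ℂ F z - fderiv ℂ F y‖ ≤ K * ‖z - y‖) :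
    ∀ y ∈ ball x R, ∀ z ∈ ball x R,
      ‖F z - F y - fderiv ℂ F y (z - y)‖ ≤ K * ‖z - y‖ ^ 2 := fun y hy z hz => by
  have hseg : segment ℝ y z ⊆ ball x R := (convex_ball x R).segment_subset hy hz
  have hle := (convex_segment y z).norm_image_sub_le_of_norm_fderiv_le' (𝕜 := ℂ) (f := F)
    (φ := fderiv ℂ F y) (C := K * ‖z - y‖)
    (fun v hv => hF.differentiableAt (isOpen_ball.mem_nhds (hseg hv)))
    (fun v hv => (hK y hy v (hseg hv)).trans
      (mul_le_mul_of_nonneg_left (norm_sub_le_of_mem_segment hv) hK₀))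
    (left_mem_segment ℝ y z) (right_mem_segment ℝ y z)
  exact hle.trans_eq (by ring)

lemma exists_ball_norm_fderiv_le_and_norm_sub_sub_fderiv_le_sq (hs : IsOpen s)
    (hF : DifferentiableOn ℂ F s) (hx : x ∈ s) :
    ∃ R > 0, ∃ K, ball x R ⊆ s ∧ (∀ y ∈ ball x R, ‖fderiv ℂ F y‖ ≤ K) ∧
      ∀ y ∈ ball x R, ∀ z ∈ ball x R, ‖F z - F y - fderiv ℂ F y (z - y)‖ ≤ K * ‖z - y‖ ^ 2 := by
  have hbdd : ∀ᶠ y in 𝓝 x, y ∈ s ∧ ‖F y‖ < ‖F x‖ + 1 :=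
    (hs.eventually_mem hx).and
      ((hF.continuousOn.continuousAt (hs.mem_nhds hx)).norm.eventually_lt_const (lt_add_one _))
  obtain ⟨ε, hε, hball⟩ := Metric.eventually_nhds_iff_ball.1 hbdd
  set r := ε / 3 with hr
  have hr₀ : 0 < r := by positivity
  rw [show ε = r + r + r by ring] at hball
  have hF' : DifferentiableOn ℂ F (ball x (r + r + r)) := hF.mono fun y hy => (hball y hy).1
  have hsub₂ : ball x (r + r) ⊆ ball x (r + r + r) := ball_subset_ball (by linarith)
  have hsub₁ : ball x r ⊆ ball x (r + r) := ball_subset_ball (by linarith)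
  set L := 2 * (‖F x‖ + 1) / r
  have : 0 ≤ L := by positivity
  have hfderiv : ∀ y ∈ ball x (r + r), ‖fderiv ℂ F y‖ ≤ L :=
    norm_fderiv_le_of_forall_mem_ball_add_norm_le hr₀ hF' fun y hy => (hball y hy).2.le
  have hlip : ∀ y ∈ ball x (r + r), ∀ z ∈ ball x (r + r), ‖F z - F y‖ ≤ L * ‖z - y‖ :=
    fun y hy z hz => (convex_ball x (r + r)).norm_image_sub_le_of_norm_fderiv_le
      (fun v hv => hF'.differentiableAt (isOpen_ball.mem_nhds (hsub₂ hv))) hfderiv hy hz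
  refine ⟨r, hr₀, max L (2 * L / r), fun y hy => (hball y (hsub₂ (hsub₁ hy))).1,
    fun y hy => (hfderiv y (hsub₁ hy)).trans (le_max_left _ _), fun y hy z hz => ?_⟩
  refine (norm_sub_sub_fderiv_le_sq (hF'.mono (hsub₁.trans hsub₂)) (by positivity)
    (norm_fderiv_sub_le_of_forall_mem_ball_norm_sub_le hr₀ (hF'.mono hsub₂) hlip)
    y hy z hz).trans ?_
  gcongr
  exact le_max_right _ _

lemma differentiableAt_of_tendstoUniformlyOn_ball [CompleteSpace W] {ι : Type*} {l : Filter ι}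
    [l.NeBot] {G : ι → V → W} (hR : 0 < R)
    (hG : ∀ᶠ n in l, DifferentiableOn ℂ (G n) (ball x R))
    (hlim : TendstoUniformlyOn G F l (ball x R)) : DifferentiableAt ℂ F x := by
  set r := R / 2 with hr
  have hr₀ : 0 < r := by positivity
  have hRr : ball x R = ball x (r + r) := by rw [add_halves]
  have hsub : ball x r ⊆ ball x R := ball_subset_ball (by linarith)
  have hcauchy : UniformCauchySeqOn (fun n => fderiv ℂ (G n)) l (ball x r) := by
    intro u hu
    obtain ⟨ε, hε, hu⟩ := Metric.mem_uniformity_dist.1 hu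
    filter_upwards [hlim.uniformCauchySeqOn _ (Metric.dist_mem_uniformity (ε := ε * r / 3)
      (by positivity)), hG.prod_mk hG] with n hn hGn y hy
    have hdiff : ∀ i, DifferentiableOn ℂ (G i) (ball x R) → DifferentiableAt ℂ (G i) y :=
      fun i hi => hi.differentiableAt (isOpen_ball.mem_nhds (hsub hy))
    rw [hRr] at hGn hn
    have hle := norm_fderiv_le_of_forall_mem_ball_add_norm_le hr₀ (hGn.1.sub hGn.2)
      (fun v hv => (dist_eq_norm (G n.1 v) (G n.2 v)).symm.trans_le (le_of_lt (hn v hv))) y hy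
    rw [← hRr] at hGn
    rw [fderiv_sub (hdiff _ hGn.1) (hdiff _ hGn.2), ← dist_eq_norm] at hle
    refine hu (hle.trans_lt ?_)
    rw [div_lt_iff₀ hr₀]
    nlinarith
  have hpt : ∀ y ∈ ball x r, ∃ g', Tendsto (fun n => fderiv ℂ (G n) y) l (𝓝 g') := fun y hy =>
    cauchy_map_iff_exists_tendsto.1 (hcauchy.cauchy_map hy)
  choose! g' hg' using hpt
  have hderiv := (hcauchy.tendstoUniformlyOn_of_tendsto hg').tendstoUniformlyOnFilter.mono_right
    (le_principal_iff.2 (ball_mem_nhds x hr₀))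
  refine (hasFDerivAt_of_tendstoUniformlyOnFilter (f := G) hderiv ?_ ?_).differentiableAt
  · filter_upwards [hG.prod_mk (ball_mem_nhds x hR)] with n hn
    exact (hn.1.differentiableAt (isOpen_ball.mem_nhds hn.2)).hasFDerivAt
  · filter_upwards [ball_mem_nhds x hR] with y hy using hlim.tendsto_at hy

lemma differentiableAt_fderiv_apply [CompleteSpace W] (hs : IsOpen s)
    (hF : DifferentiableOn ℂ F s) (hx : x ∈ s) (h : V) :
    DifferentiableAt ℂ (fun v => fderiv ℂ F v h) x := by
  obtain ⟨R, hR, K, hRs, -, hK⟩ :=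
    exists_ball_norm_fderiv_le_and_norm_sub_sub_fderiv_le_sq hs hF hx
  have htendsto : ∀ c : ℝ, Tendsto (fun t : ℂ => ‖t‖ * c) (𝓝[≠] 0) (𝓝 0) := fun c => by
    have : Continuous fun t : ℂ => ‖t‖ * c := by fun_prop
    simpa using (this.tendsto 0).mono_left nhdsWithin_le_nhds
  have hsmall : ∀ᶠ t : ℂ in 𝓝[≠] 0, ∀ v ∈ ball x (R / 2), v + t • h ∈ ball x R := by
    filter_upwards [(htendsto ‖h‖).eventually_lt_const (half_pos hR)] with t ht v hv
    rw [mem_ball_iff_norm] at hv ⊢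
    rw [← norm_smul] at ht
    rw [add_sub_right_comm]
    linarith [norm_add_le (v - x) (t • h)]
  have hsub : ball x (R / 2) ⊆ ball x R := ball_subset_ball (by linarith)
  refine differentiableAt_of_tendstoUniformlyOn_ball (l := 𝓝[≠] (0 : ℂ))
    (G := fun t v => t⁻¹ • (F (v + t • h) - F v)) (half_pos hR) ?_
    (Metric.tendstoUniformlyOn_iff.2 fun ε hε => ?_)
  · filter_upwards [hsmall] with t ht
    have hF' := hF.mono hRs
    exact ((hF'.comp (by fun_prop) ht).sub (hF'.mono hsub)).const_smul t⁻¹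
  · filter_upwards [hsmall, (htendsto (K * ‖h‖ ^ 2)).eventually_lt_const hε,
      self_mem_nhdsWithin] with t ht htε ht₀ v hv
    have hle := hK v (hsub hv) _ (ht v hv)
    rw [add_sub_cancel_left, map_smul] at hle
    rw [dist_comm, dist_eq_norm]
    have ht₀ : t ≠ 0 := ht₀
    calc ‖t⁻¹ • (F (v + t • h) - F v) - fderiv ℂ F v h‖
        = ‖t‖⁻¹ * ‖F (v + t • h) - F v - t • fderiv ℂ F v h‖ := by
          rw [← norm_inv, ← norm_smul, smul_sub _ (_ - _), inv_smul_smul₀ ht₀]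
      _ ≤ ‖t‖⁻¹ * (K * ‖t • h‖ ^ 2) := by gcongr
      _ = ‖t‖ * (K * ‖h‖ ^ 2) := by
          have := norm_ne_zero_iff.2 ht₀
          rw [norm_smul]
          field_simp
      _ < ε := htε

lemma norm_fderiv_add_sub_fderiv_sub_le_sq [CompleteSpace W] (hR : 0 < R)
    (hF : DifferentiableOn ℂ F (ball x R))
    (hK : ∀ y ∈ ball x R, ∀ z ∈ ball x R, ‖F z - F y - fderiv ℂ F y (z - y)‖ ≤ K * ‖z - y‖ ^ 2) :
    ∀ h ∈ ball (0 : V) (R / 2),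
      ‖fderiv ℂ F (x + h) - fderiv ℂ F x - fderiv ℂ (fun v => fderiv ℂ F v h) x‖ ≤
        4 * K / R * ‖h‖ ^ 2 := fun h hh => by
  have hdiff : ∀ v ∈ ball x R, DifferentiableAt ℂ F v :=
    fun v hv => hF.differentiableAt (isOpen_ball.mem_nhds hv)
  have hadd : ∀ v ∈ ball x (R / 2), v + h ∈ ball x R := fun v hv => by
    rw [mem_ball_iff_norm] at hv ⊢
    rw [mem_ball_zero_iff] at hh
    rw [add_sub_right_comm]
    linarith [norm_add_le (v - x) h]
  have hsub : ball x (R / 2) ⊆ ball x R := ball_subset_ball (by linarith)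
  have hderiv : ∀ v ∈ ball x (R / 2), HasFDerivAt (fun v => F (v + h) - F v - fderiv ℂ F v h)
      (fderiv ℂ F (v + h) - fderiv ℂ F v - fderiv ℂ (fun v => fderiv ℂ F v h) v) v :=
    fun v hv => (((hasFDerivAt_comp_add_right h).2 (hdiff _ (hadd v hv)).hasFDerivAt).sub
      (hdiff v (hsub hv)).hasFDerivAt).sub
        (differentiableAt_fderiv_apply isOpen_ball hF (hsub hv) h).hasFDerivAt
  have hcauchy := norm_fderiv_le_of_forall_mem_ball_norm_le (M := K * ‖h‖ ^ 2) (half_pos hR)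
    (fun v hv => (hderiv v hv).differentiableAt.differentiableWithinAt)
    (fun v hv => by simpa using hK v (hsub hv) _ (hadd v hv))
  rw [(hderiv x (mem_ball_self (half_pos hR))).fderiv] at hcauchy
  exact hcauchy.trans_eq (by ring)

/-- The second derivative `h ↦ D(DF · h)(x)` of a holomorphic map, as a linear map in the
direction `h` of the inner derivative. -/
def fderivFDerivApply [CompleteSpace W] (hs : IsOpen s) (hF : DifferentiableOn ℂ F s)
    (hx : x ∈ s) : V →ₗ[ℂ] V →L[ℂ] W where
  toFun h := fderiv ℂ (fun v => fderiv ℂ F v h) x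
  map_add' h k := by
    simp only [map_add]
    exact fderiv_fun_add (differentiableAt_fderiv_apply hs hF hx h)
      (differentiableAt_fderiv_apply hs hF hx k)
  map_smul' c h := by
    simp only [map_smul]
    exact fderiv_fun_const_smul (differentiableAt_fderiv_apply hs hF hx h) c

lemma differentiableOn_fderiv [CompleteSpace W] (hs : IsOpen s) (hF : DifferentiableOn ℂ F s) :
    DifferentiableOn ℂ (fderiv ℂ F) s := fun x hx => by
  refine DifferentiableAt.differentiableWithinAt ?_
  obtain ⟨R, hR, K, hRs, hfderiv, hK⟩ :=
    exists_ball_norm_fderiv_le_and_norm_sub_sub_fderiv_le_sq hs hF hx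
  have hbound : ∀ h, ‖fderivFDerivApply hs hF hx h‖ ≤ 2 * K / R * ‖h‖ := fun h => by
    have := norm_fderiv_le_of_forall_mem_ball_norm_le (M := K * ‖h‖) hR
      (fun v hv => (differentiableAt_fderiv_apply hs hF (hRs hv) h).differentiableWithinAt)
      (fun v hv => (fderiv ℂ F v).le_of_opNorm_le (hfderiv v hv) h)
    exact this.trans_eq (by ring)
  set L : V →L[ℂ] V →L[ℂ] W := (fderivFDerivApply hs hF hx).mkContinuous _ hbound
  refine HasFDerivAt.differentiableAt (f' := L) (hasFDerivAt_iff_isLittleO_nhds_zero.2 ?_)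
  refine (Asymptotics.IsBigO.of_bound (g := fun h : V => ‖h‖ ^ 2) (4 * K / R) ?_).trans_isLittleO
    (Asymptotics.isLittleO_norm_pow_id one_lt_two)
  filter_upwards [ball_mem_nhds (0 : V) (half_pos hR)] with h hh
  simpa [L, fderivFDerivApply] using
    norm_fderiv_add_sub_fderiv_sub_le_sq hR (hF.mono hRs) hK h hh

lemma differentiableOn_iteratedFDeriv [CompleteSpace W] (hs : IsOpen s)
    (hF : DifferentiableOn ℂ F s) (n : ℕ) : DifferentiableOn ℂ (iteratedFDeriv ℂ n F) s := by
  induction n with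
  | zero =>
    rw [iteratedFDeriv_zero_eq_comp]
    exact (LinearIsometryEquiv.comp_differentiableOn_iff _).2 hF
  | succ n ih =>
    rw [iteratedFDeriv_succ_eq_comp_left]
    have hderiv := differentiableOn_fderiv hs ih
    fun_prop

theorem contDiffOn_of_isOpen_of_differentiableOn [CompleteSpace W] (hs : IsOpen s)
    (hF : DifferentiableOn ℂ F s) (n : ℕ∞) : ContDiffOn ℂ n F s :=
  contDiffOn_of_differentiableOn fun m _ =>
    (differentiableOn_iteratedFDeriv hs hF m).congr
      fun _ hx => iteratedFDerivWithin_of_isOpen m hs hx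

end HolomorphicSmooth

section Slice

lemma continuousMultilinearMap_vec_two_smul_right {R V W : Type*} [Semiring R]
    [AddCommMonoid V] [Module R V] [TopologicalSpace V] [AddCommMonoid W] [Module R W]
    [TopologicalSpace W] (B : V [×2]→L[R] W) (u v : V) (c : R) :
    B ![u, c • v] = c • B ![u, v] := by
  have hupdate : ∀ w : V, Function.update ![u, v] 1 w = ![u, w] := fun w => by
    ext j
    fin_cases j <;> rfl
  simpa only [hupdate] using B.map_update_smul ![u, v] 1 c v

lemma iteratedFDeriv_zero_apply_const {𝕜 V W : Type*} [NontriviallyNormedField 𝕜]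
    [NormedAddCommGroup V] [NormedSpace 𝕜 V] [NormedAddCommGroup W] [NormedSpace 𝕜 W] {F : V → W}
    {s : Set V} {n : ℕ} (hs : IsOpen s) (h₀ : (0 : V) ∈ s) (hF : ContDiffOn 𝕜 n F s) (u : V) :
    iteratedFDeriv 𝕜 n F 0 (fun _ => u) = iteratedDeriv n (fun ζ : 𝕜 => F (ζ • u)) 0 := by
  set φ := ContinuousLinearMap.toSpanSingleton 𝕜 u with hφ
  have hs' : IsOpen (φ ⁻¹' s) := hs.preimage φ.continuous
  have h₀' : φ 0 ∈ s := by rwa [map_zero]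
  have hcomp := φ.iteratedFDerivWithin_comp_right hF hs.uniqueDiffOn hs'.uniqueDiffOn h₀' le_rfl
  rw [iteratedFDerivWithin_of_isOpen n hs' h₀', iteratedFDerivWithin_of_isOpen n hs h₀',
    map_zero] at hcomp
  rw [iteratedDeriv_eq_iteratedFDeriv]
  change _ = iteratedFDeriv 𝕜 n (F ∘ φ) 0 _
  rw [hcomp, ContinuousMultilinearMap.compContinuousLinearMap_apply]
  simp [hφ]

variable {X : Type*} [NormedAddCommGroup X] [NormedSpace ℂ X] {f : X → ℂ} {F : X → X} {u : X}

lemma mapsTo_smul_ball (hu : ‖u‖ = 1) (R : ℝ) :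
    MapsTo (fun ζ : ℂ => ζ • u) (ball 0 R) (ball 0 R) := fun ζ hζ => by
  rwa [mem_ball_zero_iff, norm_smul, hu, mul_one, ← mem_ball_zero_iff]

lemma injOn_mul_comp_smul (hF : ∀ x ∈ ball (0 : X) 1, F x = f x • x)
    (hinj : InjOn F (ball 0 1)) (hu : ‖u‖ = 1) :
    InjOn (fun ζ : ℂ => ζ * f (ζ • u)) (ball 0 1) := fun z hz z' hz' h => by
  have hslice : ∀ ζ ∈ ball (0 : ℂ) 1, F (ζ • u) = (ζ * f (ζ • u)) • u := fun ζ hζ => by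
    rw [hF _ (mapsTo_smul_ball hu 1 hζ), smul_smul, mul_comm]
  refine smul_left_injective ℂ (norm_ne_zero_iff.1 (by simp [hu])) (hinj
    (mapsTo_smul_ball hu 1 hz) (mapsTo_smul_ball hu 1 hz') ?_)
  rw [hslice z hz, hslice z' hz']
  exact congrArg (· • u) h

lemma iteratedFDeriv_zero_apply_const_of_eq_smul_self (hf : DifferentiableOn ℂ f (ball 0 1))
    (hF : ∀ x ∈ ball (0 : X) 1, F x = f x • x) (hu : ‖u‖ = 1) (n : ℕ) :
    iteratedFDeriv ℂ n F 0 (fun _ => u) =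
      iteratedDeriv n (fun ζ : ℂ => ζ * f (ζ • u)) 0 • u := by
  have hfC : ContDiffOn ℂ n f (ball 0 1) := by
    exact_mod_cast contDiffOn_of_isOpen_of_differentiableOn isOpen_ball hf n
  have hslice : (fun ζ : ℂ => F (ζ • u)) =ᶠ[nhds 0] fun ζ => (ζ * f (ζ • u)) • u := by
    filter_upwards [ball_mem_nhds 0 one_pos] with ζ hζ
    rw [hF _ (mapsTo_smul_ball hu 1 hζ), smul_smul, mul_comm]
  rw [iteratedFDeriv_zero_apply_const isOpen_ball (mem_ball_self one_pos)
    ((hfC.smul contDiffOn_id).congr hF) u, hslice.iteratedDeriv_eq]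
  refine iteratedDeriv_smul_const (contDiffAt_id.mul ?_) u
  exact (hfC.comp (by fun_prop) (mapsTo_smul_ball hu 1)).contDiffAt (ball_mem_nhds 0 one_pos)

end Slice

theorem stmt10_general {X : Type*} [NormedAddCommGroup X] [NormedSpace ℂ X]
    (f : X → ℂ) (hf : DifferentiableOn ℂ f (ball (0 : X) 1)) (hf0 : f 0 = 1)
    (F : X → X) (hF : ∀ x ∈ ball (0 : X) 1, F x = f x • x) (hinj : InjOn F (ball (0 : X) 1)) :
    ∀ u : X, ‖u‖ = 1 → ∀ lam : ℝ, lam ∈ Set.Ico (0 : ℝ) 1 →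
      ‖(((3 : ℕ).factorial : ℂ))⁻¹ • iteratedFDeriv ℂ 3 F 0 ![u, u, u] -
          (lam : ℂ) • (((2 : ℕ).factorial : ℂ))⁻¹ •
            iteratedFDeriv ℂ 2 F 0
              ![u, (((2 : ℕ).factorial : ℂ))⁻¹ • iteratedFDeriv ℂ 2 F 0 ![u, u]]‖
        ≤ 1 + 2 * Real.exp (-(2 * lam) / (1 - lam)) := by
  intro u hu lam hlam
  set g : ℂ → ℂ := fun ζ => ζ * f (ζ • u)
  have hfu : DifferentiableOn ℂ (fun ζ : ℂ => f (ζ • u)) (ball 0 1) :=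
    hf.comp (by fun_prop) (mapsTo_smul_ball hu 1)
  have hg' : deriv g 0 = 1 := by
    have hfu₀ := hfu.differentiableAt (ball_mem_nhds 0 one_pos)
    simpa [hf0] using ((hasDerivAt_id' (0 : ℂ)).fun_mul hfu₀.hasDerivAt).deriv
  have hD₂ : iteratedFDeriv ℂ 2 F 0 ![u, u] = iteratedDeriv 2 g 0 • u := by
    rw [← iteratedFDeriv_zero_apply_const_of_eq_smul_self hf hF hu]
    congr with j
    fin_cases j <;> rfl
  have hD₃ : iteratedFDeriv ℂ 3 F 0 ![u, u, u] = iteratedDeriv 3 g 0 • u := by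
    rw [← iteratedFDeriv_zero_apply_const_of_eq_smul_self hf hF hu]
    congr with j
    fin_cases j <;> rfl
  calc _ = ‖(iteratedDeriv 3 g 0 / 6 - lam * (iteratedDeriv 2 g 0 / 2) ^ 2) • u‖ := by
        simp only [hD₂, hD₃, continuousMultilinearMap_vec_two_smul_right, smul_smul, ← sub_smul]
        congr 2
        norm_num [Nat.factorial]
        ring
    _ = ‖iteratedDeriv 3 g 0 / 6 - lam * (iteratedDeriv 2 g 0 / 2) ^ 2‖ := by
        rw [norm_smul, hu, mul_one]
    _ ≤ _ := norm_coeff_three_sub_mul_sq_coeff_two_le (differentiableOn_id.mul hfu)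
        (injOn_mul_comp_smul hF hinj hu) (zero_mul _) hg' hlam

/-- **Fekete–Szegő inequality.** Let `F(x) = f(x)·x` be biholomorphic on the unit ball `𝔹`
of a complex Banach space, with `f` holomorphic and `f(0) = 1`. Then for every `u` with
`‖u‖ = 1` and every `λ ∈ [0,1)`,
`‖(1/3!)·D³F(0)(u,u,u) − λ·(1/2!)·D²F(0)(u, (1/2!)·D²F(0)(u,u))‖ ≤ 1 + 2·exp(−2λ/(1−λ))`. -/
theorem stmt10 {X : Type*} [NormedAddCommGroup X] [NormedSpace ℂ X] [CompleteSpace X]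
    (f : X → ℂ) (hf : DifferentiableOn ℂ f (ball (0 : X) 1)) (hf0 : f 0 = 1)
    (F : X → X) (hF : ∀ x ∈ ball (0 : X) 1, F x = f x • x)
    (hbi : IsBiholoOn F (ball (0 : X) 1)) :
    ∀ u : X, ‖u‖ = 1 → ∀ lam : ℝ, lam ∈ Set.Ico (0 : ℝ) 1 →
      ‖(((3 : ℕ).factorial : ℂ))⁻¹ • iteratedFDeriv ℂ 3 F 0 ![u, u, u] -
          (lam : ℂ) • (((2 : ℕ).factorial : ℂ))⁻¹ •
            iteratedFDeriv ℂ 2 F 0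
              ![u, (((2 : ℕ).factorial : ℂ))⁻¹ • iteratedFDeriv ℂ 2 F 0 ![u, u]]‖
        ≤ 1 + 2 * Real.exp (-(2 * lam) / (1 - lam)) :=
  stmt10_general f hf hf0 F hF hbi.2.1
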